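/- arXiv:math/0512408 — 5 statements merged into one kernel-verified Lean document; each statement's English description precedes it below -/
import Mathlib

section
/- Let (W, S) be a Coxeter system of finite rank. If G₁ and G₂ are parabolic subgroups of W, then the intersection G₁ ∩ G₂ is a parabolic subgroup of W; that is, there exist x ∈ W and K ⊆ S such that G₁ ∩ G₂ = x W_K x⁻¹. -/
/-!
Attach to every `w ∈ W` and `t ∈ W` the parity of the number of occurrences of `t` in the right
inversion sequence of a word for `w`. This does not depend on the word: letting `sᵢ` act on
`W × ℤ/2` by `(t, ε) ↦ (sᵢ t sᵢ, ε + [t = sᵢ])`, the braid relations hold because the inversion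
sequence of the relator `(sᵢ sⱼ)^m` runs twice through the same list. The parity is a cocycle in
`w` and detects the right inversions of `w`, which gives the strong exchange property.

Up to conjugation the intersection is `W_I ∩ d W_J d⁻¹` with `d` of minimal length in
`W_I d W_J`. Let `u d = d v` with `u ∈ W_I` and `v ∈ W_J`, and let `sⱼ`, `j ∈ J`, be a right
descent of `v`. It is a right inversion of `d v = u d` but not of `d`, so `t = d sⱼ d⁻¹` is a right
inversion of `u` and thus lies in `W_I`. As `d` is minimal in `W_I d`, from `t d = d sⱼ` we get
`ℓ t = 1`, so `t = sᵢ` with `i ∈ I`. Cancelling `sⱼ` from `v` and `sᵢ` from `u` and inducting,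
`u` is a product of such `sᵢ`.
-/

namespace CoxeterParabolic

open CoxeterSystem Pointwise

variable {B W : Type*} [Group W] {M : CoxeterMatrix B} (cs : CoxeterSystem M W)

/-! ### Parity of right inversions -/

section Parity

lemma prod_map_reverse_alternatingWord {G : Type*} [Monoid G] (f : B → G) (i j : B) (n : ℕ) :
    ((alternatingWord j i (2 * n)).reverse.map f).prod = (f i * f j) ^ n := by
  induction n with
  | zero => simp [alternatingWord]
  | succ n ih =>
    rw [show 2 * (n + 1) = 2 * n + 1 + 1 by ring]
    simp only [alternatingWord_succ, List.concat_eq_append, List.reverse_append,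
      List.reverse_singleton, List.singleton_append, List.map_cons, List.prod_cons, ih, pow_succ',
      mul_assoc]

lemma leftInvSeq_alternatingWord (i j : B) (n : ℕ) :
    cs.leftInvSeq (alternatingWord i j (2 * n)) =
      (List.range (2 * n)).map fun k ↦ cs.wordProd (alternatingWord j i (2 * k + 1)) :=
  List.ext_getElem (by simp) fun k hk _ ↦ by
    rw [cs.getElem_leftInvSeq_alternatingWord i j n k (by simpa using hk)]
    simp

lemma wordProd_alternatingWord_periodic (i j : B) (k : ℕ) :
    cs.wordProd (alternatingWord i j (2 * (M i j + k) + 1)) =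
      cs.wordProd (alternatingWord i j (2 * k + 1)) := by
  have half (n : ℕ) : (2 * n + 1) / 2 = n := by omega
  simp [prod_alternatingWord_eq_mul_pow, half, pow_add]

variable [DecidableEq W]

lemma even_count_leftInvSeq_alternatingWord (i j : B) (t : W) :
    Even ((cs.leftInvSeq (alternatingWord i j (2 * M i j))).count t) := by
  rw [leftInvSeq_alternatingWord, two_mul, List.range_add, List.map_append, List.map_map,
    List.count_append]
  simp [Function.comp_def, M.symmetric i j, wordProd_alternatingWord_periodic]

/-- The permutation `(t, ε) ↦ (sᵢ t sᵢ, ε + [t = sᵢ])` of `W × ℤ/2`. Here `t` ranges over all of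
`W`, not only over reflections. -/
def simpleAction (i : B) : Equiv.Perm (W × ZMod 2) :=
  (MulAut.conj (cs.simple i)).toEquiv.prodShear
    fun t ↦ Equiv.addRight (if t = cs.simple i then 1 else 0)

lemma simpleAction_apply (i : B) (t : W) (ε : ZMod 2) :
    simpleAction cs i (t, ε) =
      (cs.simple i * t * (cs.simple i)⁻¹, ε + if t = cs.simple i then 1 else 0) := rfl

lemma prod_map_simpleAction_apply (ω : List B) (t : W) (ε : ZMod 2) :
    (ω.map (simpleAction cs)).prod (t, ε) =
      (cs.wordProd ω * t * (cs.wordProd ω)⁻¹, ε + (cs.rightInvSeq ω).count t) := by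
  induction ω with
  | nil => simp
  | cons i ω ih =>
    have head_eq_iff : (cs.wordProd ω)⁻¹ * cs.simple i * cs.wordProd ω = t ↔
        cs.wordProd ω * t * (cs.wordProd ω)⁻¹ = cs.simple i := by
      rw [mul_inv_eq_iff_eq_mul, mul_assoc, inv_mul_eq_iff_eq_mul, eq_comm]
    simp only [List.map_cons, List.prod_cons, Equiv.Perm.mul_apply, ih, simpleAction_apply,
      wordProd_cons, rightInvSeq, List.count_cons, beq_iff_eq, head_eq_iff]
    ext <;> simp [mul_assoc, add_assoc]

lemma isLiftable_simpleAction : M.IsLiftable (simpleAction cs) := by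
  intro i j
  ext1 ⟨t, ε⟩
  have relator : cs.wordProd (alternatingWord j i (2 * M i j)).reverse = 1 := by
    rw [wordProd, prod_map_reverse_alternatingWord, simple_mul_simple_pow]
  have even_count := even_count_leftInvSeq_alternatingWord cs j i t
  rw [M.symmetric j i, ← ZMod.natCast_eq_zero_iff_even] at even_count
  rw [← prod_map_reverse_alternatingWord, prod_map_simpleAction_apply, relator,
    rightInvSeq_reverse, List.count_reverse, even_count]
  simp

/-- The action of `W` on `W × ℤ/2` in which the simple reflections act by `simpleAction`. -/
def reflectionAction : W →* Equiv.Perm (W × ZMod 2) :=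
  cs.lift ⟨simpleAction cs, isLiftable_simpleAction cs⟩

/-- The reflection cocycle: the parity of the number of times `t` occurs in the right inversion
sequence of any word for `w`. -/
def inversionParity (w t : W) : ZMod 2 := (reflectionAction cs w (t, 0)).2

lemma reflectionAction_wordProd (ω : List B) :
    reflectionAction cs (cs.wordProd ω) = (ω.map (simpleAction cs)).prod := by
  have lift_simple : reflectionAction cs ∘ cs.simple = simpleAction cs :=
    funext (cs.lift_apply_simple (isLiftable_simpleAction cs))
  rw [wordProd, map_list_prod, List.map_map, lift_simple]

lemma inversionParity_wordProd (ω : List B) (t : W) :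
    inversionParity cs (cs.wordProd ω) t = (cs.rightInvSeq ω).count t := by
  rw [inversionParity, reflectionAction_wordProd, prod_map_simpleAction_apply, zero_add]

lemma reflectionAction_apply (w t : W) (ε : ZMod 2) :
    reflectionAction cs w (t, ε) = (w * t * w⁻¹, ε + inversionParity cs w t) := by
  obtain ⟨ω, rfl⟩ := cs.wordProd_surjective w
  rw [reflectionAction_wordProd, prod_map_simpleAction_apply, inversionParity_wordProd]

lemma inversionParity_mul (x y t : W) :
    inversionParity cs (x * y) t =
      inversionParity cs y t + inversionParity cs x (y * t * y⁻¹) := by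
  rw [inversionParity, map_mul, Equiv.Perm.mul_apply, reflectionAction_apply,
    reflectionAction_apply, zero_add]

lemma inversionParity_one (t : W) : inversionParity cs 1 t = 0 := by
  simp [inversionParity]

lemma inversionParity_self {t : W} (ht : cs.IsReflection t) : inversionParity cs t t = 1 := by
  obtain ⟨x, i, rfl⟩ := ht
  have simple_self : inversionParity cs (cs.simple i) (cs.simple i) = 1 := by
    simpa using inversionParity_wordProd cs [i] (cs.simple i)
  have cancel : inversionParity cs x⁻¹ (x * cs.simple i * x⁻¹) +
      inversionParity cs x (cs.simple i) = 0 := by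
    rw [add_comm, ← inversionParity_mul, inv_mul_cancel, inversionParity_one]
  rw [inversionParity_mul, inversionParity_mul]
  simp only [mul_assoc, inv_mul_cancel_left, inv_mul_cancel, mul_one,
    inv_simple, simple_mul_simple_cancel_left, inv_inv] at cancel ⊢
  rw [simple_self, add_left_comm, cancel, add_zero]

lemma mem_rightInvSeq_of_inversionParity_ne_zero {ω : List B} {t : W}
    (h : inversionParity cs (cs.wordProd ω) t ≠ 0) : t ∈ cs.rightInvSeq ω := by
  contrapose! h
  rw [inversionParity_wordProd, List.count_eq_zero_of_not_mem h, Nat.cast_zero]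

lemma isRightInversion_of_inversionParity_ne_zero {w t : W} (h : inversionParity cs w t ≠ 0) :
    cs.IsRightInversion w t := by
  obtain ⟨ω, hω, rfl⟩ := cs.exists_isReduced w
  exact cs.isRightInversion_of_mem_rightInvSeq hω
    (mem_rightInvSeq_of_inversionParity_ne_zero cs h)

lemma inversionParity_ne_zero_of_isRightInversion {w t : W} (h : cs.IsRightInversion w t) :
    inversionParity cs w t ≠ 0 := by
  intro parity_eq_zero
  have parity_mul : inversionParity cs (w * t) t = 1 := by
    rw [inversionParity_mul, inversionParity_self cs h.1, mul_inv_cancel_right, parity_eq_zero,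
      add_zero]
  exact h.1.isRightInversion_mul_left_iff.1
    (isRightInversion_of_inversionParity_ne_zero cs (parity_mul ▸ one_ne_zero)) h

lemma isRightInversion_iff_inversionParity_ne_zero {w t : W} :
    cs.IsRightInversion w t ↔ inversionParity cs w t ≠ 0 :=
  ⟨inversionParity_ne_zero_of_isRightInversion cs, isRightInversion_of_inversionParity_ne_zero cs⟩

end Parity

lemma strong_exchange {ω : List B} {t : W}
    (h : cs.IsRightInversion (cs.wordProd ω) t) :
    ∃ k < ω.length, cs.wordProd ω * t = cs.wordProd (ω.eraseIdx k) := by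
  classical
  obtain ⟨k, hk, rfl⟩ := List.mem_iff_getElem.1 (mem_rightInvSeq_of_inversionParity_ne_zero cs
    (inversionParity_ne_zero_of_isRightInversion cs h))
  rw [← List.getD_eq_getElem _ 1 hk, wordProd_mul_getD_rightInvSeq]
  exact ⟨k, by simpa using hk, rfl⟩

lemma isRightInversion_or_of_isRightInversion_mul {x y t : W}
    (h : cs.IsRightInversion (x * y) t) :
    cs.IsRightInversion y t ∨ cs.IsRightInversion x (y * t * y⁻¹) := by
  classical
  simp only [isRightInversion_iff_inversionParity_ne_zero] at h ⊢
  contrapose! h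
  rw [inversionParity_mul, h.1, h.2, add_zero]

/-! ### Special subgroups -/

/-- The special subgroup `W_I` generated by the simple reflections indexed by `I`. -/
abbrev specialSubgroup (I : Set B) : Subgroup W := Subgroup.closure (cs.simple '' I)

variable {cs} {I J : Set B}

lemma simple_mem_specialSubgroup {i : B} (hi : i ∈ I) : cs.simple i ∈ specialSubgroup cs I :=
  Subgroup.subset_closure ⟨i, hi, rfl⟩

lemma wordProd_mem_specialSubgroup {ω : List B} (hω : ∀ i ∈ ω, i ∈ I) :
    cs.wordProd ω ∈ specialSubgroup cs I :=
  list_prod_mem (by simpa using fun i hi ↦ simple_mem_specialSubgroup (hω i hi))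

lemma exists_isReduced_wordProd_mul_simple {ω : List B} (hω : cs.IsReduced ω) (i : B) :
    ∃ ω' ⊆ ω ++ [i], cs.IsReduced ω' ∧ cs.wordProd ω * cs.simple i = cs.wordProd ω' := by
  rcases cs.length_mul_simple (cs.wordProd ω) i with longer | shorter
  · refine ⟨ω ++ [i], List.Subset.refl _, ?_, by rw [wordProd_append, wordProd_singleton]⟩
    rw [CoxeterSystem.IsReduced, wordProd_append, wordProd_singleton, longer, hω.eq,
      List.length_append, List.length_singleton]
  · obtain ⟨k, hk, erase⟩ := strong_exchange cs (ω := ω)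
      ⟨cs.isReflection_simple i, by omega⟩
    refine ⟨ω.eraseIdx k, ?_, ?_, erase⟩
    · exact List.subset_append_of_subset_left _ List.eraseIdx_subset
    · rw [CoxeterSystem.IsReduced, ← erase, List.length_eraseIdx_of_lt hk, ← hω.eq]
      omega

lemma exists_isReduced_of_mem_specialSubgroup {w : W} (hw : w ∈ specialSubgroup cs I) :
    ∃ ω : List B, (∀ i ∈ ω, i ∈ I) ∧ cs.IsReduced ω ∧ w = cs.wordProd ω := by
  have mul_simple {x : W} {i : B} (hi : i ∈ I) :
      (∃ ω : List B, (∀ i ∈ ω, i ∈ I) ∧ cs.IsReduced ω ∧ x = cs.wordProd ω) →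
      ∃ ω : List B, (∀ i ∈ ω, i ∈ I) ∧ cs.IsReduced ω ∧ x * cs.simple i = cs.wordProd ω := by
    rintro ⟨ω, letters, reduced, rfl⟩
    obtain ⟨ω', subset, reduced', eq⟩ := exists_isReduced_wordProd_mul_simple reduced i
    exact ⟨ω', fun k hk ↦ (List.mem_append.1 (subset hk)).elim (letters k)
      fun hk ↦ List.mem_singleton.1 hk ▸ hi, reduced', eq⟩
  induction hw using Subgroup.closure_induction_right with
  | one => exact ⟨[], by simp, by simp [CoxeterSystem.IsReduced], by simp⟩
  | mul_right x _ y hy ih =>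
    obtain ⟨i, hi, rfl⟩ := hy
    exact mul_simple hi ih
  | mul_inv_cancel x _ y hy ih =>
    obtain ⟨i, hi, rfl⟩ := hy
    rw [inv_simple]
    exact mul_simple hi ih

lemma exists_isRightDescent_mem {w : W} (hw : w ∈ specialSubgroup cs I) (hw1 : w ≠ 1) :
    ∃ i ∈ I, cs.IsRightDescent w i := by
  obtain ⟨ω, letters, reduced, rfl⟩ := exists_isReduced_of_mem_specialSubgroup hw
  obtain rfl | ⟨ω, i, rfl⟩ := ω.eq_nil_or_concat'
  · simp at hw1
  · refine ⟨i, letters i (by simp), ?_⟩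
    rw [IsRightDescent, reduced.eq, ← List.concat_eq_append, wordProd_concat,
      simple_mul_simple_cancel_right, List.length_concat]
    exact Nat.lt_succ_of_le (cs.length_wordProd_le ω)

lemma specialSubgroup_descent_induction {p : (w : W) → w ∈ specialSubgroup cs I → Prop}
    (one : p 1 (one_mem _))
    (of_mul_simple : ∀ w hw, ∀ i (hi : i ∈ I), cs.IsRightDescent w i →
      p (w * cs.simple i) (mul_mem hw (simple_mem_specialSubgroup hi)) → p w hw)
    {w : W} (hw : w ∈ specialSubgroup cs I) : p w hw := by
  induction hn : cs.length w using Nat.strong_induction_on generalizing w with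
  | _ n ih =>
    obtain rfl | hw1 := eq_or_ne w 1
    · exact one
    · obtain ⟨i, hi, descent⟩ := exists_isRightDescent_mem hw hw1
      exact of_mul_simple w hw i hi descent
        (ih _ (hn ▸ descent) (mul_mem hw (simple_mem_specialSubgroup hi)) rfl)

lemma exists_eq_simple_of_length_eq_one {w : W} (hw : w ∈ specialSubgroup cs I)
    (hlen : cs.length w = 1) : ∃ i ∈ I, w = cs.simple i := by
  obtain ⟨i, hi, descent⟩ := exists_isRightDescent_mem hw (by rintro rfl; simp at hlen)
  rw [IsRightDescent, hlen, Nat.lt_one_iff, length_eq_zero_iff] at descent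
  exact ⟨i, hi, by rw [← cs.inv_simple, eq_inv_of_mul_eq_one_left descent]⟩

lemma mem_specialSubgroup_of_isRightInversion {w t : W} (hw : w ∈ specialSubgroup cs I)
    (ht : cs.IsRightInversion w t) : t ∈ specialSubgroup cs I := by
  obtain ⟨ω, letters, -, rfl⟩ := exists_isReduced_of_mem_specialSubgroup hw
  obtain ⟨k, -, erase⟩ := strong_exchange cs ht
  rw [← Subgroup.mul_mem_cancel_left _ hw, erase]
  exact wordProd_mem_specialSubgroup fun i hi ↦ letters i (List.mem_of_mem_eraseIdx hi)

/-! ### Minimal coset representatives -/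

variable (cs) in
/-- `d` has minimal length in the coset `d W_J`. The minimal representatives of the double coset
`W_I d W_J` are handled through this condition on `d` for `J` together with that on `d⁻¹` for
`I`. -/
def IsMinimalCosetRep (J : Set B) (d : W) : Prop :=
  ∀ v ∈ specialSubgroup cs J, cs.length d ≤ cs.length (d * v)

namespace IsMinimalCosetRep

variable {d : W}

lemma not_isRightInversion (hd : IsMinimalCosetRep cs J d) {t : W}
    (ht : t ∈ specialSubgroup cs J) : ¬cs.IsRightInversion d t :=
  fun inversion ↦ (hd t ht).not_gt inversion.2

lemma length_mul (hd : IsMinimalCosetRep cs J d) {v : W} (hv : v ∈ specialSubgroup cs J) :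
    cs.length (d * v) = cs.length d + cs.length v := by
  induction hv using specialSubgroup_descent_induction with
  | one => simp
  | of_mul_simple v hv j hj descent ih =>
    have hj' := simple_mem_specialSubgroup (cs := cs) hj
    have hvj := mul_mem hv hj'
    have not_descent : ¬cs.IsRightDescent (d * (v * cs.simple j)) j := by
      rw [← isRightInversion_simple_iff_isRightDescent]
      intro inversion
      obtain inversion | inversion := isRightInversion_or_of_isRightInversion_mul cs inversion
      · exact (cs.isReflection_simple j).isRightInversion_mul_left_iff.1 inversion
          (by simpa using descent)
      · exact hd.not_isRightInversion (mul_mem (mul_mem hvj hj') (inv_mem hvj)) inversion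
    rw [not_isRightDescent_iff, mul_assoc, simple_mul_simple_cancel_right, ih] at not_descent
    rw [isRightDescent_iff] at descent
    omega

lemma exists_simple_mul_eq (hd : IsMinimalCosetRep cs I d⁻¹) {j : B}
    (hj : ¬cs.IsRightDescent d j) (mem : d * cs.simple j * d⁻¹ ∈ specialSubgroup cs I) :
    ∃ i ∈ I, cs.simple i * d = d * cs.simple j := by
  have length_conj : cs.length (d * cs.simple j * d⁻¹) = 1 := by
    have additive := hd.length_mul (inv_mem mem)
    rw [← mul_inv_rev, inv_mul_cancel_right, length_inv, length_inv, length_inv,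
      cs.not_isRightDescent_iff.1 hj] at additive
    omega
  obtain ⟨i, hi, eq⟩ := exists_eq_simple_of_length_eq_one mem length_conj
  exact ⟨i, hi, by rw [← eq, inv_mul_cancel_right]⟩

end IsMinimalCosetRep

variable (cs) in
lemma exists_isMinimalCosetRep_mem_doubleCoset (I J : Set B) (w : W) :
    ∃ d ∈ DoubleCoset.doubleCoset w (specialSubgroup cs I : Set W) (specialSubgroup cs J),
      IsMinimalCosetRep cs J d ∧ IsMinimalCosetRep cs I d⁻¹ := by
  obtain ⟨d, hd, minimal⟩ := exists_minimalFor_of_wellFoundedLT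
    (· ∈ DoubleCoset.doubleCoset w (specialSubgroup cs I : Set W) (specialSubgroup cs J)) cs.length
    ⟨w, DoubleCoset.mem_doubleCoset_self _ _ w⟩
  obtain ⟨a, ha, b, hb, rfl⟩ := DoubleCoset.mem_doubleCoset.1 hd
  have length_le {y : W} (hy : y ∈ DoubleCoset.doubleCoset w _ _) :
      cs.length (a * w * b) ≤ cs.length y := (le_total _ _).elim id (minimal hy)
  refine ⟨_, hd, fun v hv ↦ length_le ?_, fun u hu ↦ ?_⟩
  · exact DoubleCoset.mem_doubleCoset.2 ⟨a, ha, b * v, mul_mem hb hv, by simp only [mul_assoc]⟩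
  · rw [length_inv, ← cs.length_inv (_ * u), mul_inv_rev, inv_inv]
    exact length_le (DoubleCoset.mem_doubleCoset.2
      ⟨u⁻¹ * a, mul_mem (inv_mem hu) ha, b, hb, by simp only [mul_assoc]⟩)

/-! ### Intersections -/

variable (cs) in
/-- The index set `K = I ∩ d J d⁻¹`, where `i` and `j` stand for the simple reflections `sᵢ` and
`sⱼ`. It generates the intersection of `W_I` and `d W_J d⁻¹` when `d` is minimal. -/
def interConj (I J : Set B) (d : W) : Set B :=
  {i ∈ I | ∃ j ∈ J, cs.simple i * d = d * cs.simple j}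

lemma mem_specialSubgroup_of_mul_eq_mul {d u v : W} (hJ : IsMinimalCosetRep cs J d)
    (hI : IsMinimalCosetRep cs I d⁻¹) (hu : u ∈ specialSubgroup cs I)
    (hv : v ∈ specialSubgroup cs J) (huv : u * d = d * v) :
    u ∈ specialSubgroup cs (interConj cs I J d) := by
  induction hv using specialSubgroup_descent_induction generalizing u with
  | one =>
    obtain rfl : u = 1 := by simpa using huv
    exact one_mem _
  | of_mul_simple v hv j hj descent ih =>
    have not_inversion := hJ.not_isRightInversion (simple_mem_specialSubgroup hj)
    have inversion : cs.IsRightInversion (u * d) (cs.simple j) := by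
      refine ⟨cs.isReflection_simple j, ?_⟩
      rw [huv, mul_assoc, hJ.length_mul hv,
        hJ.length_mul (mul_mem hv (simple_mem_specialSubgroup hj))]
      exact Nat.add_lt_add_left descent _
    have conj_inversion :=
      (isRightInversion_or_of_isRightInversion_mul cs inversion).resolve_left not_inversion
    obtain ⟨i, hi, hij⟩ := hI.exists_simple_mul_eq (by simpa using not_inversion)
      (mem_specialSubgroup_of_isRightInversion hu conj_inversion)
    have hiK : i ∈ interConj cs I J d := ⟨hi, j, hj, hij⟩
    have shorter := ih (mul_mem hu (simple_mem_specialSubgroup hi))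
      (by rw [mul_assoc, hij, ← mul_assoc, huv, mul_assoc])
    exact (Subgroup.mul_mem_cancel_right _ (simple_mem_specialSubgroup hiK)).1 shorter

lemma specialSubgroup_inf_conj_smul_specialSubgroup {d : W} (hJ : IsMinimalCosetRep cs J d)
    (hI : IsMinimalCosetRep cs I d⁻¹) :
    specialSubgroup cs I ⊓ MulAut.conj d • specialSubgroup cs J =
      specialSubgroup cs (interConj cs I J d) := by
  apply le_antisymm
  · rintro u ⟨hu, v, hv, rfl⟩
    exact mem_specialSubgroup_of_mul_eq_mul hJ hI hu hv (by simp)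
  · rw [Subgroup.closure_le]
    rintro _ ⟨i, ⟨hi, j, hj, hij⟩, rfl⟩
    refine ⟨simple_mem_specialSubgroup hi, cs.simple j, simple_mem_specialSubgroup hj, ?_⟩
    simp [← hij]

variable (cs) in
lemma exists_conj_smul_inf_conj_smul_eq (w₁ w₂ : W) (I J : Set B) :
    ∃ (x : W) (K : Set B),
      MulAut.conj w₁ • specialSubgroup cs I ⊓ MulAut.conj w₂ • specialSubgroup cs J =
        MulAut.conj x • specialSubgroup cs K := by
  obtain ⟨d, hd, hJ, hI⟩ := exists_isMinimalCosetRep_mem_doubleCoset cs I J (w₁⁻¹ * w₂)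
  obtain ⟨a, ha, b, hb, rfl⟩ := DoubleCoset.mem_doubleCoset.1 hd
  set d := a * (w₁⁻¹ * w₂) * b with d_def
  refine ⟨w₁ * a⁻¹, interConj cs I J d, ?_⟩
  have conj_I : MulAut.conj w₁ • specialSubgroup cs I =
      MulAut.conj (w₁ * a⁻¹) • specialSubgroup cs I := by
    rw [map_mul, mul_smul, Subgroup.conj_smul_eq_self_of_mem (inv_mem ha)]
  have conj_J : MulAut.conj w₂ • specialSubgroup cs J =
      MulAut.conj (w₁ * a⁻¹) • MulAut.conj d • specialSubgroup cs J := by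
    rw [← mul_smul, ← map_mul, show w₁ * a⁻¹ * d = w₂ * b by simp [d_def, mul_assoc], map_mul,
      mul_smul, Subgroup.conj_smul_eq_self_of_mem hb]
  rw [conj_I, conj_J, ← Subgroup.smul_inf, specialSubgroup_inf_conj_smul_specialSubgroup hJ hI]

end CoxeterParabolic

theorem inter_parabolic_is_parabolic_general
    {B W : Type*} [Group W] {M : CoxeterMatrix B}
    (cs : CoxeterSystem M W) (G₁ G₂ : Subgroup W)
    (h₁ : ∃ (w : W) (I : Set B),
      G₁ = (Subgroup.closure (cs.simple '' I)).map (MulAut.conj w).toMonoidHom)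
    (h₂ : ∃ (w : W) (J : Set B),
      G₂ = (Subgroup.closure (cs.simple '' J)).map (MulAut.conj w).toMonoidHom) :
    ∃ (x : W) (K : Set B),
      G₁ ⊓ G₂ = (Subgroup.closure (cs.simple '' K)).map (MulAut.conj x).toMonoidHom := by
  obtain ⟨w₁, I, rfl⟩ := h₁
  obtain ⟨w₂, J, rfl⟩ := h₂
  exact CoxeterParabolic.exists_conj_smul_inf_conj_smul_eq cs w₁ w₂ I J

/-- **Theorem 1 (Tits; Solomon).** Let `(W, S)` be a Coxeter system of finite rank.
The intersection of two parabolic subgroups `G₁, G₂` of `W` is a parabolic subgroup,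
i.e. there exist `x ∈ W` and `K ⊆ S` with `G₁ ⊓ G₂ = x W_K x⁻¹`. -/
theorem inter_parabolic_is_parabolic
    {B : Type*} [Finite B] {W : Type*} [Group W] {M : CoxeterMatrix B}
    (cs : CoxeterSystem M W) (G₁ G₂ : Subgroup W)
    (h₁ : ∃ (w : W) (I : Set B),
      G₁ = (Subgroup.closure (cs.simple '' I)).map (MulAut.conj w).toMonoidHom)
    (h₂ : ∃ (w : W) (J : Set B),
      G₂ = (Subgroup.closure (cs.simple '' J)).map (MulAut.conj w).toMonoidHom) :
    ∃ (x : W) (K : Set B),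
      G₁ ⊓ G₂ = (Subgroup.closure (cs.simple '' K)).map (MulAut.conj x).toMonoidHom :=
  inter_parabolic_is_parabolic_general cs G₁ G₂ h₁ h₂
end

section
/- Let (W, S) be a Coxeter system of finite rank. If W_I = w W_J w⁻¹ for some w ∈ W and subsets I, J ⊆ S, then |I| = |J|. -/
/-!
In the geometric representation of `W` on the real vector space with basis `(e i)` indexed by `B`,
the generator `s i` acts as a reflection along `e i`. Hence the displacements `g v - v`, for `g` in
the special subgroup `W_I`, span the space with basis `(e i)` for `i ∈ I`, of dimension `|I|`.
Conjugating a subgroup by `w` applies `w` to its space of displacements, which preserves the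
dimension.
-/

open Module Representation
open scoped Cardinal Real

section ProductOfReflections

variable {R V : Type*} [CommRing R] [AddCommGroup V] [Module R V] {x y : V} {f g : Dual R V}

lemma preReflection_mul_self (hf : f x = 2) : preReflection x f * preReflection x f = 1 :=
  LinearMap.ext (involutive_preReflection hf)

lemma commute_preReflection (hfy : f y = 0) (hgx : g x = 0) :
    Commute (preReflection x f) (preReflection y g) := by
  ext v
  simp only [Module.End.mul_apply, preReflection_apply, map_sub, map_smul, hfy, hgx]
  module

open Polynomial in
lemma aeval_preReflection_mul_preReflection (hf : f x = 2) (hg : g y = 2) :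
    aeval (preReflection x f * preReflection y g)
      ((X ^ 2 - C (f y * g x - 2) * X + 1) * (X - 1)) = 0 := by
  ext v
  simp only [map_mul, map_add, map_sub, aeval_X, aeval_C, map_one, pow_two,
    Module.End.mul_apply, LinearMap.add_apply, LinearMap.sub_apply, Module.End.one_apply,
    Module.algebraMap_end_apply, preReflection_apply, map_smul, hf, hg, LinearMap.zero_apply]
  module

end ProductOfReflections

open Polynomial in
-- The factors have the distinct roots `exp (± 2πi / m)` and `1`, all of them `m`-th roots of unity.
lemma quadratic_mul_X_sub_one_dvd_X_pow_sub_one {m : ℕ} (hm : 3 ≤ m) :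
    (X ^ 2 - C (2 * Real.cos (2 * π / m)) * X + 1) * (X - 1) ∣ (X ^ m - 1 : ℝ[X]) := by
  set θ : ℝ := 2 * π / m with hθ
  have hζ : IsPrimitiveRoot (Complex.exp (θ * Complex.I)) m := by
    convert Complex.isPrimitiveRoot_exp m (by lia) using 2
    push_cast [hθ]
    ring
  have him : (Complex.exp (θ * Complex.I)).im ≠ 0 := by
    rw [Complex.exp_ofReal_mul_I_im]
    have hm' : (3 : ℝ) ≤ m := by exact_mod_cast hm
    refine (Real.sin_pos_of_pos_of_lt_pi (by positivity) ?_).ne'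
    rw [hθ, div_lt_iff₀ (by positivity)]
    nlinarith [Real.pi_pos]
  have hroot : aeval (Complex.exp (θ * Complex.I)) (∑ i ∈ Finset.range m, X ^ i : ℝ[X]) = 0 := by
    simpa only [map_sum, map_pow, aeval_X] using hζ.geom_sum_eq_zero (by lia)
  have hdvd := quadratic_dvd_of_aeval_eq_zero_im_ne_zero _ hroot him
  rw [Complex.exp_ofReal_mul_I_re, Complex.norm_exp_ofReal_mul_I, one_pow, C_1] at hdvd
  exact (mul_dvd_mul_right hdvd (X - 1)).trans (geom_sum_mul X m).dvd

lemma preReflection_mul_preReflection_pow_eq_one {V : Type*} [AddCommGroup V] [Module ℝ V]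
    {x y : V} {f g : Dual ℝ V} (hf : f x = 2) (hg : g y = 2) {m : ℕ} (hm : 3 ≤ m)
    (hfg : f y * g x = 4 * Real.cos (π / m) ^ 2) :
    (preReflection x f * preReflection y g) ^ m = 1 := by
  have htrace : f y * g x - 2 = 2 * Real.cos (2 * π / m) := by
    rw [hfg, mul_div_assoc, Real.cos_two_mul]
    ring
  have hcubic := aeval_preReflection_mul_preReflection hf hg
  rw [htrace] at hcubic
  have hzero := Polynomial.aeval_eq_zero_of_dvd_aeval_eq_zero
    (quadratic_mul_X_sub_one_dvd_X_pow_sub_one hm) hcubic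
  simpa only [map_sub, map_pow, Polynomial.aeval_X, map_one, sub_eq_zero] using hzero

lemma range_preReflection_sub_one {K V : Type*} [Field K] [AddCommGroup V] [Module K V]
    (x : V) {f : Dual K V} (hf : f ≠ 0) :
    LinearMap.range (preReflection x f - 1) = K ∙ x := by
  have hneg : preReflection x f - 1 = -f.smulRight x := by
    ext v
    simp [preReflection_apply]
  rw [hneg, LinearMap.range_neg, LinearMap.range_smulRight_apply hf]

section Displacement

variable {k G V : Type*} [CommRing k] [Group G] [AddCommGroup V] [Module k V]

/-- The submodule of `V` spanned by the displacements `ρ g v - v` of the elements `g` of a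
subgroup `H`, i.e. the kernel of the projection of `V` onto its `H`-coinvariants. -/
def displacement (ρ : Representation k G V) (H : Subgroup G) : Submodule k V :=
  Coinvariants.ker (ρ.comp H.subtype)

variable {ρ : Representation k G V} {H : Subgroup G}

lemma sub_mem_displacement {g : G} (hg : g ∈ H) (v : V) : ρ g v - v ∈ displacement ρ H :=
  Coinvariants.sub_mem_ker (ρ := ρ.comp H.subtype) ⟨g, hg⟩ v

lemma displacement_le_iff {p : Submodule k V} :
    displacement ρ H ≤ p ↔ ∀ g ∈ H, ∀ v, ρ g v - v ∈ p := by
  refine ⟨fun hp g hg v ↦ hp (sub_mem_displacement hg v), fun hp ↦ Submodule.span_le.mpr ?_⟩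
  rintro _ ⟨⟨g, v⟩, rfl⟩
  exact hp g g.2 v

lemma displacement_map_conj_le (ρ : Representation k G V) (H : Subgroup G) (w : G) :
    displacement ρ (H.map (MulAut.conj w).toMonoidHom) ≤ (displacement ρ H).map (ρ w) := by
  rw [displacement_le_iff]
  rintro _ ⟨g, hg, rfl⟩ v
  refine ⟨ρ g (ρ w⁻¹ v) - ρ w⁻¹ v, sub_mem_displacement hg _, ?_⟩
  simp [map_mul]

lemma displacement_map_conj (ρ : Representation k G V) (H : Subgroup G) (w : G) :
    displacement ρ (H.map (MulAut.conj w).toMonoidHom) = (displacement ρ H).map (ρ w) := by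
  refine (displacement_map_conj_le ρ H w).antisymm ?_
  rw [Submodule.map_le_iff_le_comap, displacement_le_iff]
  intro g hg v
  have hconj := sub_mem_displacement (ρ := ρ)
    (Subgroup.mem_map_of_mem (MulAut.conj w).toMonoidHom hg) (ρ w v)
  simpa [map_mul] using hconj

lemma displacement_closure (ρ : Representation k G V) (S : Set G) :
    displacement ρ (Subgroup.closure S) = ⨆ s ∈ S, LinearMap.range (ρ s - 1) := by
  apply le_antisymm
  · rw [displacement_le_iff]
    intro g hg
    induction hg using Subgroup.closure_induction with
    | mem s hs => exact fun v ↦ Submodule.mem_iSup_of_mem s (Submodule.mem_iSup_of_mem hs ⟨v, rfl⟩)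
    | one => simp
    | mul a b _ _ ha hb =>
      intro v
      simpa [map_mul] using add_mem (ha (ρ b v)) (hb v)
    | inv a _ ha =>
      intro v
      simpa using neg_mem (ha (ρ a⁻¹ v))
  · refine iSup₂_le fun s hs ↦ ?_
    rintro _ ⟨v, rfl⟩
    exact sub_mem_displacement (Subgroup.subset_closure hs) v

lemma rank_displacement_map_conj (ρ : Representation k G V) (H : Subgroup G) (w : G) :
    Module.rank k (displacement ρ (H.map (MulAut.conj w).toMonoidHom)) =
      Module.rank k (displacement ρ H) := by
  rw [displacement_map_conj, rank_map_eq (ρ.apply_bijective w).injective]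

end Displacement

section GeometricRepresentation

variable {B W : Type*} [Group W] {M : CoxeterMatrix B}

/-- The linear form `v ↦ 2 ⟨e i, v⟩` on `⨁ ℝ e j`, where `⟨e i, e j⟩ = -cos (π / M i j)` is the
symmetric bilinear form of the Coxeter matrix. The entry `M i j = 0`, which encodes the order `∞`,
gives `⟨e i, e j⟩ = -1` as it should, since `π / 0 = 0`. -/
noncomputable def geometricForm (M : CoxeterMatrix B) (i : B) : Dual ℝ (B →₀ ℝ) :=
  Finsupp.linearCombination ℝ fun j ↦ -2 * Real.cos (π / M i j)

lemma geometricForm_single (M : CoxeterMatrix B) (i j : B) :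
    geometricForm M i (Finsupp.single j 1) = -2 * Real.cos (π / M i j) := by
  simp [geometricForm]

lemma geometricForm_single_self (M : CoxeterMatrix B) (i : B) :
    geometricForm M i (Finsupp.single i 1) = 2 := by
  simp [geometricForm_single]

lemma geometricForm_ne_zero (M : CoxeterMatrix B) (i : B) : geometricForm M i ≠ 0 := by
  intro h
  simpa [h] using geometricForm_single_self M i

/-- The reflection `v ↦ v - 2 ⟨e i, v⟩ e i` by which the generator `s i` acts in the geometric
representation. -/
noncomputable def geometricReflection (M : CoxeterMatrix B) (i : B) : Module.End ℝ (B →₀ ℝ) :=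
  preReflection (Finsupp.single i 1) (geometricForm M i)

lemma geometricReflection_mul_self (M : CoxeterMatrix B) (i : B) :
    geometricReflection M i * geometricReflection M i = 1 :=
  preReflection_mul_self (geometricForm_single_self M i)

lemma isLiftable_geometricReflection (M : CoxeterMatrix B) :
    M.IsLiftable (geometricReflection M) := by
  intro i j
  have hij := geometricForm_single M i j
  have hji := geometricForm_single M j i
  rw [M.symmetric j i] at hji
  obtain rfl | hne := eq_or_ne i j
  · rw [M.diagonal, pow_one]
    exact geometricReflection_mul_self M i
  have hM_ne_one : M i j ≠ 1 := M.off_diagonal i j hne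
  obtain hM | hM | hM : M i j = 0 ∨ M i j = 2 ∨ 3 ≤ M i j := by lia
  · rw [hM, pow_zero]
  · have hcomm : Commute (geometricReflection M i) (geometricReflection M j) :=
      commute_preReflection (by simp [hij, hM]) (by simp [hji, hM])
    rw [hM, hcomm.mul_pow, pow_two, pow_two, geometricReflection_mul_self,
      geometricReflection_mul_self, mul_one]
  · refine preReflection_mul_preReflection_pow_eq_one (geometricForm_single_self M i)
      (geometricForm_single_self M j) hM ?_
    rw [hij, hji]
    ring

/-- The geometric representation of a Coxeter group `W` on `⨁ ℝ e i`. -/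
noncomputable def geometricRepresentation (cs : CoxeterSystem M W) :
    Representation ℝ W (B →₀ ℝ) :=
  cs.lift ⟨geometricReflection M, isLiftable_geometricReflection M⟩

lemma geometricRepresentation_simple (cs : CoxeterSystem M W) (i : B) :
    geometricRepresentation cs (cs.simple i) = geometricReflection M i :=
  cs.lift_apply_simple _ i

lemma displacement_closure_simple (cs : CoxeterSystem M W) (I : Set B) :
    displacement (geometricRepresentation cs) (Subgroup.closure (cs.simple '' I)) =
      Submodule.span ℝ ((fun i ↦ Finsupp.single i 1) '' I) := by
  simp only [displacement_closure, iSup_image, geometricRepresentation_simple,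
    geometricReflection, range_preReflection_sub_one _ (geometricForm_ne_zero M _),
    Submodule.span_eq_iSup_of_singleton_spans (_ '' I)]

lemma rank_displacement_closure_simple (cs : CoxeterSystem M W) (I : Set B) :
    Module.rank ℝ
      (displacement (geometricRepresentation cs) (Subgroup.closure (cs.simple '' I))) = #I := by
  have hindep := (Finsupp.linearIndependent_single_one ℝ B).linearIndepOn_id.mono
    (Set.image_subset_range _ I)
  rw [displacement_closure_simple, rank_span_set hindep,
    Cardinal.mk_image_eq (Finsupp.single_left_injective one_ne_zero)]

end GeometricRepresentation

theorem card_eq_of_special_subgroups_conjugate_general {B W : Type*} [Group W]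
    {M : CoxeterMatrix B} (cs : CoxeterSystem M W) (I J : Set B) (w : W)
    (h : Subgroup.closure (cs.simple '' I) =
      (Subgroup.closure (cs.simple '' J)).map (MulAut.conj w).toMonoidHom) :
    #I = #J := by
  rw [← rank_displacement_closure_simple cs I, h, rank_displacement_map_conj,
    rank_displacement_closure_simple]

/-- If two special subgroups `W_I` and `W_J` of a finite-rank Coxeter system are
conjugate, `W_I = w W_J w⁻¹`, then `|I| = |J|`. -/
theorem card_eq_of_special_subgroups_conjugate
    {B : Type*} [Finite B] {W : Type*} [Group W] {M : CoxeterMatrix B}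
    (cs : CoxeterSystem M W) (I J : Set B) (w : W)
    (h : Subgroup.closure (cs.simple '' I) =
      (Subgroup.closure (cs.simple '' J)).map (MulAut.conj w).toMonoidHom) :
    I.ncard = J.ncard :=
  congrArg Cardinal.toNat (card_eq_of_special_subgroups_conjugate_general cs I J w h)
end

section
/- Let (W, S) be a Coxeter system of finite rank and let x ∈ W and K, I ⊆ S. If x W_K x⁻¹ ⊆ W_I, then |K| ≤ |I|. -/
/-!
Let `W` act on the real vector space with basis `α_i` (`i ∈ B`) by its geometric representation.
An element of `W_I` moves every vector by an element of `V_I`, the span of the `α_i` with `i ∈ I`.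
If `x s_k x⁻¹ ∈ W_I`, then this applies to the vector `x α_k`, which `x s_k x⁻¹` negates; hence
`-2 x α_k ∈ V_I`. So `x` maps `V_K` injectively into `V_I`, and dimensions can be compared.
Only the existence of the geometric representation is needed, not its faithfulness.
-/

open Module

section Reflections

variable {k V : Type*} [Field k] [AddCommGroup V] [Module k V]
  {x y : V} {f g : Dual k V}

theorem exists_linearCombination_pair_dual_eq (hf : f x = 2) (hg : g y = 2)
    (hfg : f y * g x ≠ 4) (z : V) :
    ∃ a b : k, f (a • x + b • y) = f z ∧ g (a • x + b • y) = g z := by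
  have hdet : 4 - f y * g x ≠ 0 := sub_ne_zero.2 hfg.symm
  refine ⟨(2 * f z - f y * g z) / (4 - f y * g x), (2 * g z - g x * f z) / (4 - f y * g x), ?_, ?_⟩
  all_goals
    simp only [map_add, map_smul, smul_eq_mul, hf, hg]
    field_simp
    ring

-- Off the plane spanned by `x` and `y` there is nothing to check: if `f y * g x ≠ 4`, that plane
-- is a complement of `ker f ⊓ ker g`, on which both reflections are trivial.
theorem reflection_mul_reflection_pow_eq_one_of_apply_eq (hf : f x = 2) (hg : g y = 2)
    (hfg : f y * g x ≠ 4) {m : ℕ} (hx : ((reflection hf * reflection hg) ^ m) x = x)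
    (hy : ((reflection hf * reflection hg) ^ m) y = y) :
    (reflection hf * reflection hg) ^ m = 1 := by
  ext z
  obtain ⟨a, b, hfz, hgz⟩ := exists_linearCombination_pair_dual_eq hf hg hfg z
  set u := a • x + b • y with hu
  have fix_u : ((reflection hf * reflection hg) ^ m) u = u := by
    rw [hu, map_add, map_smul, map_smul, hx, hy]
  have fix_sub : (reflection hf * reflection hg) (z - u) = z - u := by
    simp [reflection_apply, hfz, hgz]
  have fix_sub_pow : ((reflection hf * reflection hg) ^ m) (z - u) = z - u := by
    rw [LinearEquiv.pow_apply]
    exact Function.iterate_fixed fix_sub m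
  rw [← sub_add_cancel z u, map_add, fix_sub_pow, fix_u, LinearEquiv.coe_one, id_eq]

end Reflections

section DihedralReflections

open Polynomial.Chebyshev

variable {V : Type*} [AddCommGroup V] [Module ℝ V] {x y : V} {f g : Dual ℝ V}

theorem reflection_mul_reflection_pow_apply_self_eq_self (hf : f x = 2) (hg : g y = 2) {m : ℕ}
    (hm : 2 ≤ m) (hfy : f y = -2 * Real.cos (Real.pi / m))
    (hgx : g x = -2 * Real.cos (Real.pi / m)) :
    ((reflection hf * reflection hg) ^ m) x = x := by
  obtain rfl | hm := hm.eq_or_lt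
  · have hgx_zero : g x = 0 := by simpa using hgx
    simp [pow_two, reflection_apply, hf, hgx_zero, two_smul]
  set θ : ℝ := 2 * (Real.pi / m) with hθ
  have htrace : 2 * Real.cos θ = f y * g x - 2 := by
    rw [hfy, hgx, hθ, Real.cos_two_mul]
    ring
  have hm_real : (2 : ℝ) < m := mod_cast hm
  have hmθ : m * θ = 2 * Real.pi := by
    rw [hθ]
    field_simp
  have hsin : Real.sin θ ≠ 0 := by
    have hθ_pos : 0 < θ := by positivity
    exact (Real.sin_pos_of_pos_of_lt_pi hθ_pos (by nlinarith)).ne'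
  have hS_pred : (S ℝ (m - 1)).eval (2 * Real.cos θ) = 0 := by
    refine (mul_eq_zero.1 ?_).resolve_right hsin
    rw [S_two_mul_real_cos]
    push_cast
    rw [sub_add_cancel, hmθ, Real.sin_two_pi]
  have hS : (S ℝ m).eval (2 * Real.cos θ) = 1 := by
    refine mul_right_cancel₀ hsin ?_
    rw [S_two_mul_real_cos, Int.cast_natCast, add_one_mul, hmθ, add_comm, Real.sin_add_two_pi,
      one_mul]
  rw [reflection_mul_reflection_pow_apply_self hf hg m _ htrace, hS, hS_pred]
  simp

theorem reflection_mul_reflection_pow_eq_one (hf : f x = 2) (hg : g y = 2) {m : ℕ} (hm : 2 ≤ m)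
    (hfy : f y = -2 * Real.cos (Real.pi / m)) (hgx : g x = -2 * Real.cos (Real.pi / m)) :
    (reflection hf * reflection hg) ^ m = 1 := by
  have hfg : f y * g x ≠ 4 := by
    have hsin : 0 < Real.sin (Real.pi / m) :=
      Real.sin_pos_of_pos_of_lt_pi (by positivity) (div_lt_self Real.pi_pos (mod_cast hm))
    rw [hfy, hgx]
    nlinarith [Real.sin_sq_add_cos_sq (Real.pi / m)]
  refine reflection_mul_reflection_pow_eq_one_of_apply_eq hf hg hfg
    (reflection_mul_reflection_pow_apply_self_eq_self hf hg hm hfy hgx) ?_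
  have hinv : (reflection hf * reflection hg) ^ m = ((reflection hg * reflection hf) ^ m)⁻¹ := by
    rw [← inv_pow, mul_inv_rev, reflection_inv, reflection_inv]
  rw [hinv, LinearEquiv.coe_inv, LinearEquiv.symm_apply_eq]
  exact (reflection_mul_reflection_pow_apply_self_eq_self hg hf hm hgx hfy).symm

end DihedralReflections

section GeometricRepresentation

variable {B : Type*} (M : CoxeterMatrix B)

/-- The simple coroot of index `i` in the geometric representation: the functional on `B →₀ ℝ` with
value `-2 cos (π / M i j)` at the simple root `α_j = Finsupp.single j 1`. Where `M i j = 0` encodes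
an infinite order, `π / 0 = 0` gives the customary value `-2`. -/
noncomputable def simpleCoroot (i : B) : Dual ℝ (B →₀ ℝ) :=
  Finsupp.linearCombination ℝ fun j ↦ -2 * Real.cos (Real.pi / M i j)

theorem simpleCoroot_single (i j : B) :
    simpleCoroot M i (Finsupp.single j 1) = -2 * Real.cos (Real.pi / M i j) := by
  simp [simpleCoroot]

theorem simpleCoroot_single_self (i : B) : simpleCoroot M i (Finsupp.single i 1) = 2 := by
  simp [simpleCoroot_single]

theorem isLiftable_reflection_simpleCoroot :
    M.IsLiftable fun i ↦ reflection (simpleCoroot_single_self M i) := by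
  intro i j
  obtain rfl | hij := eq_or_ne i j
  · rw [M.diagonal, pow_one, mul_eq_one_iff_eq_inv, reflection_inv]
  obtain hM | hM : M i j = 0 ∨ 2 ≤ M i j := by
    have := M.off_diagonal i j hij
    lia
  · rw [hM, pow_zero]
  · exact reflection_mul_reflection_pow_eq_one _ _ hM (simpleCoroot_single M i j)
      (by rw [simpleCoroot_single, M.symmetric])

variable {M} {W : Type*} [Group W]

/-- The geometric (Tits) representation of a Coxeter group on the real vector space with basis the
simple roots `Finsupp.single i 1`. -/
noncomputable def geometricRep (cs : CoxeterSystem M W) : W →* ((B →₀ ℝ) ≃ₗ[ℝ] (B →₀ ℝ)) :=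
  cs.lift ⟨_, isLiftable_reflection_simpleCoroot M⟩

variable (cs : CoxeterSystem M W) {I : Set B}

theorem geometricRep_simple (i : B) :
    geometricRep cs (cs.simple i) = reflection (simpleCoroot_single_self M i) :=
  cs.lift_apply_simple (isLiftable_reflection_simpleCoroot M) i

theorem geometricRep_sub_self_mem_supported {w : W}
    (hw : w ∈ Subgroup.closure (cs.simple '' I)) (v : B →₀ ℝ) :
    geometricRep cs w v - v ∈ Finsupp.supported ℝ ℝ I := by
  induction hw using Subgroup.closure_induction generalizing v with
  | mem w hw =>
    obtain ⟨i, hi, rfl⟩ := hw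
    rw [geometricRep_simple, reflection_apply, sub_sub_cancel_left]
    exact neg_mem (Submodule.smul_mem _ _ (Finsupp.single_mem_supported ℝ 1 hi))
  | one => simp
  | mul a b _ _ ha hb =>
    rw [map_mul, LinearEquiv.mul_apply, ← sub_add_sub_cancel]
    exact add_mem (ha (geometricRep cs b v)) (hb v)
  | inv a _ ha =>
    have hmem := ha (geometricRep cs a⁻¹ v)
    rw [← LinearEquiv.mul_apply, ← map_mul, mul_inv_cancel, map_one] at hmem
    exact sub_mem_comm_iff.1 hmem

theorem geometricRep_conj_simple_apply (x : W) (i : B) :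
    geometricRep cs (x * cs.simple i * x⁻¹) (geometricRep cs x (Finsupp.single i 1)) =
      -geometricRep cs x (Finsupp.single i 1) := by
  rw [← LinearEquiv.mul_apply, ← map_mul, inv_mul_cancel_right, map_mul, LinearEquiv.mul_apply,
    geometricRep_simple, reflection_apply_self, map_neg]

theorem geometricRep_single_mem_supported {x : W} {i : B}
    (h : x * cs.simple i * x⁻¹ ∈ Subgroup.closure (cs.simple '' I)) :
    geometricRep cs x (Finsupp.single i 1) ∈ Finsupp.supported ℝ ℝ I := by
  have hmem := geometricRep_sub_self_mem_supported cs h (geometricRep cs x (Finsupp.single i 1))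
  rw [geometricRep_conj_simple_apply, ← neg_add', neg_mem_iff, ← two_smul ℝ] at hmem
  exact (Submodule.smul_mem_iff _ two_ne_zero).1 hmem

end GeometricRepresentation

universe u

theorem cardinalMk_le_of_supported_le_comap {R : Type*} [Ring R] [StrongRankCondition R]
    {α β : Type u} {K : Set α} {I : Set β} {φ : (α →₀ R) →ₗ[R] (β →₀ R)}
    (hφ : Function.Injective φ)
    (h : Finsupp.supported R R K ≤ (Finsupp.supported R R I).comap φ) :
    Cardinal.mk K ≤ Cardinal.mk I := by
  have hinj : Function.Injective (φ.restrict (q := Finsupp.supported R R I) h) :=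
    fun _ _ hvw ↦ Subtype.ext (hφ (congrArg Subtype.val hvw))
  have hrank := LinearMap.rank_le_of_injective _ hinj
  rwa [(Finsupp.supportedEquivFinsupp K).rank_eq, (Finsupp.supportedEquivFinsupp I).rank_eq,
    rank_finsupp_self, rank_finsupp_self, Cardinal.lift_le] at hrank

theorem card_le_of_conj_special_le_special_general
    {B : Type*} {W : Type*} [Group W] {M : CoxeterMatrix B}
    (cs : CoxeterSystem M W) (K I : Set B) (x : W)
    (h : (Subgroup.closure (cs.simple '' K)).map (MulAut.conj x).toMonoidHom ≤
      Subgroup.closure (cs.simple '' I)) :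
    Cardinal.mk K ≤ Cardinal.mk I := by
  refine cardinalMk_le_of_supported_le_comap (R := ℝ)
    (φ := (geometricRep cs x).toLinearMap) (geometricRep cs x).injective ?_
  rw [Finsupp.supported_eq_span_single ℝ K, Submodule.span_le]
  rintro _ ⟨k, hk, rfl⟩
  have hconj : x * cs.simple k * x⁻¹ ∈ Subgroup.closure (cs.simple '' I) :=
    h ⟨cs.simple k, Subgroup.subset_closure ⟨k, hk, rfl⟩, rfl⟩
  exact geometricRep_single_mem_supported cs hconj

/-- If `x W_K x⁻¹ ⊆ W_I` in a finite-rank Coxeter system, then `|K| ≤ |I|`. -/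
theorem card_le_of_conj_special_le_special
    {B : Type*} [Finite B] {W : Type*} [Group W] {M : CoxeterMatrix B}
    (cs : CoxeterSystem M W) (K I : Set B) (x : W)
    (h : (Subgroup.closure (cs.simple '' K)).map (MulAut.conj x).toMonoidHom ≤
      Subgroup.closure (cs.simple '' I)) :
    K.ncard ≤ I.ncard :=
  Cardinal.toNat_le_toNat (card_le_of_conj_special_le_special_general cs K I x h)
    Cardinal.mk_lt_aleph0
end

section
/- Let (W, S) be a Coxeter system of finite rank and let x ∈ W and K, I ⊆ S. If x W_K x⁻¹ is a proper subgroup of W_I, then |K| < |I|. -/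
/-!
Among the elements `u x` with `u ∈ W_I` choose one for which `y = (u x)⁻¹` is shortest in `y W_I`.
For `k ∈ K` the element `w = y⁻¹ s_k y ≠ 1` lies in `W_I`, and the last letter `i` of a shortest
word in `I` for `w` is a right descent of `y w = s_k y`. By the exchange condition `s_k y s_i`
arises from `s_k` followed by a reduced word of `y` by deleting a letter. Since `y` is shorter than
`y s_i`, the deleted letter is `s_k`, whence `w = s_i`. Conjugation by `u x` thus carries `W_K` to
`W_J` for some `J ⊆ I`, where `|J| = |K|` because distinct indices give distinct simple generators;
if `J = I`, then `x W_K x⁻¹ = W_I`.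

The exchange condition comes from an action of `W` on signed reflections, and injectivity of
`i ↦ s_i` from the geometric representation.
-/

namespace CoxeterSpecial

open scoped Pointwise

/-! ### The geometric representation -/

section ReflectionOrder

open Polynomial.Chebyshev

lemma eval_S_two_mul_cos_pi_div {k : ℕ} (hk : 2 ≤ k) :
    (S ℝ (k - 1)).eval (2 * Real.cos (Real.pi / k)) = 0 := by
  have hk' : (2 : ℝ) ≤ k := by exact_mod_cast hk
  have sin_pos : 0 < Real.sin (Real.pi / k) :=
    Real.sin_pos_of_pos_of_lt_pi (by positivity) (div_lt_self Real.pi_pos (by linarith))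
  refine (mul_eq_zero.mp ?_).resolve_right sin_pos.ne'
  have angle : (((k - 1 : ℤ) : ℝ) + 1) * (Real.pi / k) = Real.pi := by
    push_cast
    field_simp
    ring
  rw [S_two_mul_real_cos, angle, Real.sin_pi]

lemma eval_S_add_eval_S_two_mul_cos {k : ℕ} (hk : 1 ≤ k) :
    (S ℝ k).eval (2 * Real.cos (2 * (Real.pi / (2 * k + 1)))) +
      (S ℝ (k - 1)).eval (2 * Real.cos (2 * (Real.pi / (2 * k + 1)))) = 0 := by
  set θ := Real.pi / (2 * k + 1) with hθ
  have hk' : (1 : ℝ) ≤ k := by exact_mod_cast hk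
  have hθπ : (2 * k + 1) * θ = Real.pi := by rw [hθ]; field_simp
  have hθ_pos : 0 < θ := by positivity
  have sin_pos : 0 < Real.sin (2 * θ) :=
    Real.sin_pos_of_pos_of_lt_pi (by positivity) (by nlinarith)
  refine (mul_eq_zero.mp ?_).resolve_right sin_pos.ne'
  have angle : (((k : ℤ) : ℝ) + 1) * (2 * θ) = θ + Real.pi := by
    push_cast
    linarith
  have angle' : (((k - 1 : ℤ) : ℝ) + 1) * (2 * θ) = Real.pi - θ := by
    push_cast
    linarith
  rw [add_mul, S_two_mul_real_cos, S_two_mul_real_cos, angle, angle', Real.sin_add_pi,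
    Real.sin_pi_sub, neg_add_cancel]

variable {R V : Type*} [CommRing R] [AddCommGroup V]

lemma reflection_mul_reflection_sq_eq_one [Module R V] {x y : V} {f g : Module.Dual R V}
    (hf : f x = 2) (hg : g y = 2) (hfy : f y = 0) (hgx : g x = 0) :
    (Module.reflection hf * Module.reflection hg) ^ 2 = 1 := by
  ext z
  simp only [pow_two, LinearEquiv.mul_apply, LinearEquiv.coe_one, id_eq, Module.reflection_apply,
    map_sub, map_smul, hf, hg, hfy, hgx]
  module

/-- In the formula for powers of a product of two reflections, each coefficient has as a factor
`S_{k-1}` if `m = 2 k`, and `S_k + S_{k-1}` if `m = 2 k + 1`. -/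
theorem reflection_mul_reflection_pow_eq_one [Module ℝ V] {x y : V} {f g : Module.Dual ℝ V}
    (hf : f x = 2) (hg : g y = 2) {m : ℕ} (hm : 3 ≤ m)
    (h : f y * g x = 4 * Real.cos (Real.pi / m) ^ 2) :
    (Module.reflection hf * Module.reflection hg) ^ m = 1 := by
  have ht : 2 * Real.cos (2 * (Real.pi / m)) = f y * g x - 2 := by
    rw [h, Real.cos_two_mul]
    ring
  apply LinearEquiv.toLinearMap_injective
  rw [Module.reflection_mul_reflection_pow hf hg m _ ht]
  obtain ⟨k, rfl | rfl⟩ := Nat.even_or_odd' m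
  · have angle : 2 * (Real.pi / (2 * k : ℕ)) = Real.pi / k := by
      push_cast
      field_simp
    have h₁ : (((2 * k : ℕ) : ℤ) - 1) / 2 = k - 1 := by omega
    have h₂ : (((2 * k : ℕ) : ℤ) - 2) / 2 = k - 1 := by omega
    rw [angle, h₁, h₂, eval_S_two_mul_cos_pi_div (by omega)]
    simp
  · have h₀ : ((2 * k + 1 : ℕ) : ℤ) / 2 = k := by omega
    have h₁ : (((2 * k + 1 : ℕ) : ℤ) - 1) / 2 = k := by omega
    have h₂ : (((2 * k + 1 : ℕ) : ℤ) - 2) / 2 = k - 1 := by omega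
    have h₃ : (((2 * k + 1 : ℕ) : ℤ) - 3) / 2 = k - 1 := by omega
    have sum_eq_zero := eval_S_add_eval_S_two_mul_cos (k := k) (by omega)
    rw [h₀, h₁, h₂, h₃]
    push_cast
    rw [sum_eq_zero]
    simp

end ReflectionOrder

variable {B : Type*} {W : Type*} [Group W] {M : CoxeterMatrix B}

/-- The entry `-2 cos (π / M i j)` of the Cartan matrix of the geometric representation. An infinite
order is encoded by `M i j = 0`, for which `π / 0 = 0` gives the intended value `-2`. -/
noncomputable def cartanEntry (M : CoxeterMatrix B) (i j : B) : ℝ :=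
  -2 * Real.cos (Real.pi / M i j)

lemma cartanEntry_comm (M : CoxeterMatrix B) (i j : B) : cartanEntry M i j = cartanEntry M j i := by
  rw [cartanEntry, cartanEntry, M.symmetric]

/-- The simple coroot of index `i`: the linear form, on the space whose basis of simple roots is
indexed by `B`, with values the entries `cartanEntry M i j`. -/
noncomputable def simpleCoroot (M : CoxeterMatrix B) (i : B) : Module.Dual ℝ (B →₀ ℝ) :=
  Finsupp.linearCombination ℝ (cartanEntry M i)

lemma simpleCoroot_single (i j : B) :
    simpleCoroot M i (Finsupp.single j 1) = cartanEntry M i j := by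
  simp [simpleCoroot]

lemma simpleCoroot_single_self (i : B) : simpleCoroot M i (Finsupp.single i 1) = 2 := by
  simp [simpleCoroot_single, cartanEntry]

/-- The reflection by which the simple generator of index `i` acts in the geometric
representation. -/
noncomputable def simpleReflection (M : CoxeterMatrix B) (i : B) : (B →₀ ℝ) ≃ₗ[ℝ] (B →₀ ℝ) :=
  Module.reflection (simpleCoroot_single_self (M := M) i)

lemma simpleReflection_injective (M : CoxeterMatrix B) :
    Function.Injective (simpleReflection M) := by
  intro i j hij
  by_contra hne
  have coord_eq := congrArg (fun r => r (Finsupp.single i (1 : ℝ)) i) hij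
  simp only [simpleReflection, Module.reflection_apply, simpleCoroot_single_self] at coord_eq
  simp [Ne.symm hne] at coord_eq

theorem isLiftable_simpleReflection (M : CoxeterMatrix B) : M.IsLiftable (simpleReflection M) := by
  intro i j
  rcases eq_or_ne i j with rfl | hij
  · rw [M.diagonal, pow_one]
    exact mul_eq_one_iff_eq_inv.mpr (Module.reflection_inv _).symm
  have h_ne_one : M i j ≠ 1 := M.off_diagonal i j hij
  obtain h_zero | h_two | h_three : M i j = 0 ∨ M i j = 2 ∨ 3 ≤ M i j := by omega
  · rw [h_zero, pow_zero]
  · have entry_eq_zero : cartanEntry M i j = 0 := by simp [cartanEntry, h_two]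
    rw [h_two]
    apply reflection_mul_reflection_sq_eq_one
    · rw [simpleCoroot_single, entry_eq_zero]
    · rw [simpleCoroot_single, cartanEntry_comm, entry_eq_zero]
  · apply reflection_mul_reflection_pow_eq_one _ _ h_three
    rw [simpleCoroot_single, simpleCoroot_single, cartanEntry_comm M j i, cartanEntry]
    ring

theorem simple_injective (cs : CoxeterSystem M W) : Function.Injective cs.simple := by
  intro i j hij
  apply simpleReflection_injective M
  rw [← cs.lift_apply_simple (isLiftable_simpleReflection M) i, hij, cs.lift_apply_simple]

/-! ### Signed reflections and the exchange condition -/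

section Exchange

variable (cs : CoxeterSystem M W)

open CoxeterSystem (alternatingWord alternatingWord_succ)

lemma prod_map_alternatingWord_two_mul {G : Type*} [Monoid G] (f : B → G) (i j : B) (n : ℕ) :
    ((alternatingWord i j (2 * n)).map f).prod = (f i * f j) ^ n := by
  induction n with
  | zero => simp [alternatingWord]
  | succ n ih =>
    rw [Nat.mul_succ, alternatingWord_succ, alternatingWord_succ]
    simp [ih, pow_succ]

lemma rightInvSeq_alternatingWord (i j : B) (n : ℕ) :
    cs.rightInvSeq (alternatingWord i j n) =
      ((List.range n).map fun l => (cs.simple j * cs.simple i) ^ l * cs.simple j).reverse := by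
  induction n generalizing i j with
  | zero => simp [alternatingWord]
  | succ n ih =>
    have conj_eq (l : ℕ) :
        cs.simple j * ((cs.simple i * cs.simple j) ^ l * cs.simple i) * cs.simple j =
          (cs.simple j * cs.simple i) ^ (l + 1) * cs.simple j := by
      rw [← mul_assoc, ← mul_pow_mul, mul_assoc _ (cs.simple j), ← pow_succ]
    rw [alternatingWord_succ, cs.rightInvSeq_concat, ih, List.range_succ_eq_map]
    simp [List.map_reverse, Function.comp_def, conj_eq]

open Classical in
/-- The sequence `l ↦ (s_j s_i)ˡ s_j` has period `M i j`. -/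
lemma even_count_rightInvSeq_alternatingWord (i j : B) (t : W) :
    Even ((cs.rightInvSeq (alternatingWord i j (2 * M i j))).count t) := by
  have periodic (l : ℕ) : (cs.simple j * cs.simple i) ^ (M i j + l) * cs.simple j =
      (cs.simple j * cs.simple i) ^ l * cs.simple j := by
    rw [pow_add, M.symmetric, cs.simple_mul_simple_pow, one_mul]
  rw [rightInvSeq_alternatingWord, List.count_reverse, two_mul, List.range_add, List.map_append,
    List.map_map]
  simp only [Function.comp_def, periodic, List.count_append]
  exact Even.add_self _

open Classical in
/-- The involution `(t, ε) ↦ (s_i t s_i, ε + [t = s_i])` of `W × ZMod 2`, by which the simple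
generator of index `i` acts on signed reflections. Only reflections `t` matter; all of `W` is
allowed in order to avoid a subtype. -/
noncomputable def signedConj (i : B) : Equiv.Perm (W × ZMod 2) :=
  Function.Involutive.toPerm
    (fun p => (cs.simple i * p.1 * cs.simple i, p.2 + if p.1 = cs.simple i then 1 else 0)) <| by
    rintro ⟨t, ε⟩
    have h_iff : cs.simple i * t * cs.simple i = cs.simple i ↔ t = cs.simple i := by
      rw [mul_eq_right, mul_eq_one_iff_inv_eq, cs.inv_simple, eq_comm]
    simp only [h_iff, add_assoc, CharTwo.add_self_eq_zero]
    simp [mul_assoc]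

open Classical in
lemma signedConj_apply (i : B) (t : W) (ε : ZMod 2) :
    signedConj cs i (t, ε) =
      (cs.simple i * t * cs.simple i, ε + if t = cs.simple i then 1 else 0) := rfl

open Classical in
lemma prod_map_signedConj_apply (ω : List B) (t : W) (ε : ZMod 2) :
    (ω.map (signedConj cs)).prod (t, ε) =
      (cs.wordProd ω * t * (cs.wordProd ω)⁻¹, ε + ((cs.rightInvSeq ω).count t : ZMod 2)) := by
  induction ω with
  | nil => simp
  | cons i ω ih =>
    have h_iff : cs.wordProd ω * t * (cs.wordProd ω)⁻¹ = cs.simple i ↔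
        (cs.wordProd ω)⁻¹ * cs.simple i * cs.wordProd ω = t := by
      rw [mul_inv_eq_iff_eq_mul, mul_assoc, inv_mul_eq_iff_eq_mul, eq_comm]
    rw [List.map_cons, List.prod_cons, Equiv.Perm.mul_apply, ih, signedConj_apply,
      CoxeterSystem.rightInvSeq, List.count_cons, cs.wordProd_cons]
    simp only [h_iff, beq_iff_eq]
    simp [mul_assoc, add_assoc]

lemma isLiftable_signedConj : M.IsLiftable (signedConj cs) := by
  classical
  intro i j
  have wordProd_eq_one : cs.wordProd (alternatingWord i j (2 * M i j)) = 1 := by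
    rw [CoxeterSystem.wordProd, prod_map_alternatingWord_two_mul, cs.simple_mul_simple_pow]
  ext1 ⟨t, ε⟩
  rw [← prod_map_alternatingWord_two_mul, prod_map_signedConj_apply, wordProd_eq_one,
    (even_count_rightInvSeq_alternatingWord cs i j t).natCast_zmod_two]
  simp

/-- The action of `W` on signed reflections, in which the simple generator of index `i` acts by
`signedConj cs i`. -/
noncomputable def signedConjHom : W →* Equiv.Perm (W × ZMod 2) :=
  cs.lift ⟨signedConj cs, isLiftable_signedConj cs⟩

lemma signedConjHom_simple (i : B) : signedConjHom cs (cs.simple i) = signedConj cs i :=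
  cs.lift_apply_simple (isLiftable_signedConj cs) i

open Classical in
/-- The parity of the multiplicity of `t` in the inversion sequence of a word thus depends only on
the product of the word. -/
lemma signedConjHom_wordProd_apply (ω : List B) (t : W) (ε : ZMod 2) :
    signedConjHom cs (cs.wordProd ω) (t, ε) =
      (cs.wordProd ω * t * (cs.wordProd ω)⁻¹, ε + ((cs.rightInvSeq ω).count t : ZMod 2)) := by
  rw [← prod_map_signedConj_apply, CoxeterSystem.wordProd, map_list_prod, List.map_map]
  congr 4
  exact funext (signedConjHom_simple cs)

lemma exists_signedConjHom_apply (w t : W) :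
    ∃ δ : ZMod 2, ∀ ε, signedConjHom cs w (t, ε) = (w * t * w⁻¹, ε + δ) := by
  classical
  obtain ⟨ω, rfl⟩ := cs.wordProd_surjective w
  exact ⟨_, signedConjHom_wordProd_apply cs ω t⟩

lemma signedConjHom_apply_self {t : W} (ht : cs.IsReflection t) (ε : ZMod 2) :
    signedConjHom cs t (t, ε) = (t, ε + 1) := by
  obtain ⟨w, i, rfl⟩ := ht
  obtain ⟨δ, hδ⟩ := exists_signedConjHom_apply cs w (cs.simple i)
  have inv_apply : signedConjHom cs w⁻¹ (w * cs.simple i * w⁻¹, ε) = (cs.simple i, ε - δ) := by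
    rw [map_inv, Equiv.Perm.inv_eq_iff_eq, hδ, sub_add_cancel]
  rw [map_mul, map_mul, Equiv.Perm.mul_apply, Equiv.Perm.mul_apply, inv_apply,
    signedConjHom_simple, signedConj_apply, cs.simple_mul_simple_self, one_mul, if_pos rfl, hδ]
  congr 1
  ring

/-- A reduced word `ω'` of `π ω * t` cannot have `t` in its inversion sequence, so by parity `t`
occurs in that of `ω`. -/
theorem mem_rightInvSeq_of_isRightInversion {ω : List B} {t : W}
    (h : cs.IsRightInversion (cs.wordProd ω) t) : t ∈ cs.rightInvSeq ω := by
  classical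
  obtain ⟨ω', hω', hprod⟩ := cs.exists_isReduced (cs.wordProd ω * t)
  have not_mem' : t ∉ cs.rightInvSeq ω' := fun hmem => by
    have length_lt := (cs.isRightInversion_of_mem_rightInvSeq hω' hmem).2
    rw [← hprod, mul_assoc, h.1.mul_self, mul_one] at length_lt
    exact lt_asymm length_lt h.2
  by_contra not_mem
  have sign_eq : signedConjHom cs (cs.wordProd ω) (signedConjHom cs t (t, 0)) =
      signedConjHom cs (cs.wordProd ω') (t, 0) := by
    rw [← hprod, map_mul, Equiv.Perm.mul_apply]
  rw [signedConjHom_apply_self cs h.1, signedConjHom_wordProd_apply, signedConjHom_wordProd_apply,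
    List.count_eq_zero_of_not_mem not_mem, List.count_eq_zero_of_not_mem not_mem'] at sign_eq
  simpa using congrArg Prod.snd sign_eq

theorem strong_exchange {ω : List B} {t : W} (h : cs.IsRightInversion (cs.wordProd ω) t) :
    ∃ n < ω.length, cs.wordProd ω * t = cs.wordProd (ω.eraseIdx n) := by
  obtain ⟨n, hn, rfl⟩ := List.mem_iff_getElem.mp (mem_rightInvSeq_of_isRightInversion cs h)
  refine ⟨n, by simpa using hn, ?_⟩
  rw [← List.getD_eq_getElem _ 1 hn, cs.wordProd_mul_getD_rightInvSeq]

theorem exchange_append {ω ω' : List B} {i : B}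
    (h : cs.IsRightDescent (cs.wordProd ω * cs.wordProd ω') i) :
    (∃ n < ω.length, cs.wordProd ω * cs.wordProd ω' * cs.simple i =
      cs.wordProd (ω.eraseIdx n) * cs.wordProd ω') ∨
    ∃ n < ω'.length, cs.wordProd ω' * cs.simple i = cs.wordProd (ω'.eraseIdx n) := by
  rw [← cs.wordProd_append, ← cs.isRightInversion_simple_iff_isRightDescent] at h
  obtain ⟨n, hn, hprod⟩ := strong_exchange cs h
  rw [cs.wordProd_append] at hprod
  rw [List.length_append] at hn
  rcases lt_or_ge n ω.length with hlt | hge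
  · rw [List.eraseIdx_append_of_lt_length hlt, cs.wordProd_append] at hprod
    exact .inl ⟨n, hlt, hprod⟩
  · rw [List.eraseIdx_append_of_length_le hge, cs.wordProd_append, mul_assoc,
      mul_left_cancel_iff] at hprod
    exact .inr ⟨n - ω.length, by omega, hprod⟩

lemma length_wordProd_eraseIdx_lt {ω : List B} {n : ℕ} (hn : n < ω.length) :
    cs.length (cs.wordProd (ω.eraseIdx n)) < ω.length :=
  (cs.length_wordProd_le _).trans_lt (by rw [List.length_eraseIdx_of_lt hn]; omega)

end Exchange

/-! ### Special subgroups and minimal coset representatives -/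

section Special

variable (cs : CoxeterSystem M W)

/-- The special (standard parabolic) subgroup `W_I`. -/
def specialSubgroup (I : Set B) : Subgroup W :=
  Subgroup.closure (cs.simple '' I)

variable {cs} {I : Set B}

lemma simple_mem_specialSubgroup {i : B} (hi : i ∈ I) : cs.simple i ∈ specialSubgroup cs I :=
  Subgroup.subset_closure ⟨i, hi, rfl⟩

lemma mem_specialSubgroup_iff {w : W} :
    w ∈ specialSubgroup cs I ↔ ∃ ω : List B, (∀ i ∈ ω, i ∈ I) ∧ cs.wordProd ω = w := by
  constructor
  · intro hw
    induction hw using Subgroup.closure_induction_left with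
    | one => exact ⟨[], by simp, by simp⟩
    | mul_left x hx y hy ih =>
      obtain ⟨i, hi, rfl⟩ := hx
      obtain ⟨ω, hω, rfl⟩ := ih
      exact ⟨i :: ω, by simpa [hi] using hω, cs.wordProd_cons i ω⟩
    | inv_mul_cancel x hx y hy ih =>
      obtain ⟨i, hi, rfl⟩ := hx
      obtain ⟨ω, hω, rfl⟩ := ih
      exact ⟨i :: ω, by simpa [hi] using hω, by rw [cs.wordProd_cons, cs.inv_simple]⟩
  · rintro ⟨ω, hω, rfl⟩
    exact Subgroup.list_prod_mem _
      (List.forall_mem_map.mpr fun i hi => simple_mem_specialSubgroup (hω i hi))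

variable (cs I) in
/-- The element `y` has minimal length in its left coset `y W_I`. -/
def IsMinCosetRep (y : W) : Prop :=
  ∀ u ∈ specialSubgroup cs I, cs.length y ≤ cs.length (y * u)

variable (cs I) in
lemma exists_isMinCosetRep_mul (x : W) :
    ∃ u ∈ specialSubgroup cs I, IsMinCosetRep cs I (x * u) := by
  obtain ⟨u, hu, hmin⟩ := exists_minimalFor_of_wellFoundedLT (· ∈ specialSubgroup cs I)
    (fun u => cs.length (x * u)) ⟨1, one_mem _⟩
  refine ⟨u, hu, fun v hv => ?_⟩
  rw [mul_assoc]
  exact (le_total _ _).elim id (hmin (mul_mem hu hv))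

/-- The descent is the last letter of a shortest word in `I` with product `w`. -/
theorem IsMinCosetRep.exists_isRightDescent {y w : W} (hy : IsMinCosetRep cs I y)
    (hw : w ∈ specialSubgroup cs I) (hw_ne : w ≠ 1) :
    ∃ i ∈ I, cs.IsRightDescent (y * w) i := by
  obtain ⟨ω, ⟨hωI, rfl⟩, hmin⟩ := exists_minimalFor_of_wellFoundedLT
    (fun ω : List B => (∀ i ∈ ω, i ∈ I) ∧ cs.wordProd ω = w) List.length
    (mem_specialSubgroup_iff.mp hw)
  obtain rfl | ⟨ω', i, rfl⟩ := ω.eq_nil_or_concat'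
  · exact absurd cs.wordProd_nil hw_ne
  have hω'I : ∀ j ∈ ω', j ∈ I := fun j hj => hωI j (by simp [hj])
  have hi : i ∈ I := hωI i (by simp)
  refine ⟨i, hi, ?_⟩
  obtain ⟨τ, hτ, rfl⟩ := cs.exists_isReduced y
  rw [cs.wordProd_append, cs.wordProd_singleton, ← mul_assoc]
  by_contra not_descent
  have descent : cs.IsRightDescent (cs.wordProd τ * cs.wordProd ω') i :=
    cs.isRightDescent_iff_not_isRightDescent_mul.mpr not_descent
  rcases exchange_append cs descent with ⟨n, hn, hprod⟩ | ⟨n, -, hprod⟩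
  · have hω' : cs.wordProd ω' ∈ specialSubgroup cs I := mem_specialSubgroup_iff.mpr ⟨ω', hω'I, rfl⟩
    have length_le := hy _
      (mul_mem (mul_mem hω' (simple_mem_specialSubgroup hi)) (inv_mem hω'))
    rw [← mul_assoc, ← mul_assoc, hprod, mul_inv_cancel_right, hτ.eq] at length_le
    exact length_le.not_gt (length_wordProd_eraseIdx_lt cs hn)
  · have length_lt : (ω'.eraseIdx n).length < (ω' ++ [i]).length := by
      rw [List.length_append, List.length_singleton]
      exact Nat.lt_succ_of_le (List.length_eraseIdx_le ω' n)
    have eraseIdx_spec : (∀ j ∈ ω'.eraseIdx n, j ∈ I) ∧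
        cs.wordProd (ω'.eraseIdx n) = cs.wordProd (ω' ++ [i]) :=
      ⟨fun j hj => hω'I j (List.mem_of_mem_eraseIdx hj), by simp [cs.wordProd_append, hprod]⟩
    exact length_lt.not_ge (hmin eraseIdx_spec length_lt.le)

theorem IsMinCosetRep.exists_conj_simple_eq_simple {y : W} (hy : IsMinCosetRep cs I y) {k : B}
    (hk : y⁻¹ * cs.simple k * y ∈ specialSubgroup cs I) :
    ∃ i ∈ I, y⁻¹ * cs.simple k * y = cs.simple i := by
  have conj_ne_one : y⁻¹ * cs.simple k * y ≠ 1 := fun h => by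
    have simple_eq_one : cs.simple k = 1 := by simpa [mul_assoc, inv_mul_eq_one] using h
    simpa [simple_eq_one] using cs.length_simple k
  obtain ⟨i, hi, descent⟩ := hy.exists_isRightDescent hk conj_ne_one
  refine ⟨i, hi, ?_⟩
  obtain ⟨τ, hτ, rfl⟩ := cs.exists_isReduced y
  rw [mul_assoc, mul_inv_cancel_left, ← cs.wordProd_singleton k] at descent
  rcases exchange_append cs descent with ⟨n, hn, hprod⟩ | ⟨n, hn, hprod⟩
  · obtain rfl : n = 0 := by simpa using hn
    rw [cs.wordProd_singleton, List.eraseIdx_zero, List.tail_cons, cs.wordProd_nil, one_mul]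
      at hprod
    rw [mul_assoc, inv_mul_eq_iff_eq_mul, eq_mul_inv_of_mul_eq hprod, cs.inv_simple]
  · have length_le := hy _ (simple_mem_specialSubgroup hi)
    rw [hprod, hτ.eq] at length_le
    exact absurd (length_wordProd_eraseIdx_lt cs hn) length_le.not_gt

theorem exists_subset_conj_specialSubgroup_eq {K : Set B} {x : W}
    (h : MulAut.conj x • specialSubgroup cs K ≤ specialSubgroup cs I) :
    ∃ u ∈ specialSubgroup cs I, ∃ J ⊆ I, J.encard = K.encard ∧
      MulAut.conj (u * x) • specialSubgroup cs K = specialSubgroup cs J := by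
  obtain ⟨v, hv, hmin⟩ := exists_isMinCosetRep_mul cs I x⁻¹
  have conj_mem (k : B) (hk : k ∈ K) :
      (x⁻¹ * v)⁻¹ * cs.simple k * (x⁻¹ * v) ∈ specialSubgroup cs I := by
    have hx := h (Subgroup.smul_mem_pointwise_smul _ (MulAut.conj x) _
      (simple_mem_specialSubgroup hk))
    simpa [mul_assoc] using mul_mem (mul_mem (inv_mem hv) hx) hv
  choose! f hfI hf using fun k hk => hmin.exists_conj_simple_eq_simple (conj_mem k hk)
  have hf_conj (k : B) (hk : k ∈ K) :
      MulAut.conj (v⁻¹ * x) (cs.simple k) = cs.simple (f k) := by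
    rw [← hf k hk, MulAut.conj_apply]
    group
  have hf_inj : Set.InjOn f K := fun a ha b hb hab => by
    apply simple_injective cs
    apply (MulAut.conj (v⁻¹ * x)).injective
    rw [hf_conj a ha, hf_conj b hb, hab]
  refine ⟨v⁻¹, inv_mem hv, f '' K, Set.image_subset_iff.mpr hfI, hf_inj.encard_image, ?_⟩
  rw [specialSubgroup, Subgroup.smul_closure, specialSubgroup, ← Set.image_smul, Set.image_image,
    Set.image_image]
  congr 1
  exact Set.image_congr hf_conj

end Special

end CoxeterSpecial

open CoxeterSpecial in
open scoped Pointwise in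
theorem card_lt_of_conj_special_lt_special_general
    {B : Type*} {W : Type*} [Group W] {M : CoxeterMatrix B}
    (cs : CoxeterSystem M W) (K I : Set B) (hI : I.Finite) (x : W)
    (h : (Subgroup.closure (cs.simple '' K)).map (MulAut.conj x).toMonoidHom <
      Subgroup.closure (cs.simple '' I)) :
    K.ncard < I.ncard := by
  change MulAut.conj x • specialSubgroup cs K < specialSubgroup cs I at h
  obtain ⟨u, hu, J, hJI, hcard, hconj⟩ := exists_subset_conj_specialSubgroup_eq h.le
  have hJ_ne : J ≠ I := by
    rintro rfl
    rw [map_mul, mul_smul, smul_eq_iff_eq_inv_smul, ← map_inv,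
      Subgroup.conj_smul_eq_self_of_mem (inv_mem hu)] at hconj
    exact h.ne hconj
  calc K.ncard = J.ncard := congrArg ENat.toNat hcard.symm
    _ < I.ncard := Set.ncard_lt_ncard (hJI.ssubset_of_ne hJ_ne) hI

/-- If `x W_K x⁻¹` is a proper subgroup of `W_I` in a finite-rank Coxeter system,
then `|K| < |I|`. -/
theorem card_lt_of_conj_special_lt_special
    {B : Type*} [Finite B] {W : Type*} [Group W] {M : CoxeterMatrix B}
    (cs : CoxeterSystem M W) (K I : Set B) (x : W)
    (h : (Subgroup.closure (cs.simple '' K)).map (MulAut.conj x).toMonoidHom <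
      Subgroup.closure (cs.simple '' I)) :
    K.ncard < I.ncard :=
  card_lt_of_conj_special_lt_special_general cs K I I.toFinite x h
end

section
/- Let (W, S) be a Coxeter system of finite rank and let A be a subset of W. If w W_J w⁻¹ and x W_K x⁻¹ are two parabolic subgroups containing A, both of which have minimal rank among all parabolic subgroups containing A (i.e., |J| and |K| are minimal, so |J| = |K|), then w W_J w⁻¹ = x W_K x⁻¹. In particular, the minimal-rank parabolic subgroup containing A is unique. -/
/-!
Let `N(w)` be the set of right inversions of `w`, the reflections `t` with `ℓ(wt) < ℓ(w)`. The
proof rests on the cocycle identity `N(uv) = N(v) ∆ v⁻¹ N(u) v`. It comes from an action of `W` on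
`W × ℤ/2` in which `s_i` sends `(t, ε)` to `(s_i t s_i, ε + [t = s_i])`: the sign that `(t, ε)`
picks up under `w` is the parity of the number of occurrences of `t` in the right inversion sequence
of any word for `w`, and for a reflection `t` it equals `1` precisely when `t ∈ N(w)`. In
particular, `N(u) ⊆ W_J` for `u ∈ W_J`.

Let `d` be shortest in `d W_K`, so that `N(d)` misses `W_K`, and let `v ∈ W_K ∩ d⁻¹ W_J d`, say
`d v = u d` with `u ∈ W_J`. If `s_k` with `k ∈ K` is a right descent of `v`, then
`s_k ∈ N(d v) = N(u d)`, hence `d s_k d⁻¹ ∈ N(u) ⊆ W_J`. Removing `s_k` from `v` and iterating shows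
that `W_K ∩ d⁻¹ W_J d = W_L`, where `L = {k ∈ K | d s_k d⁻¹ ∈ W_J}`. Consequently the intersection
of `w W_J w⁻¹` and `x W_K x⁻¹` has the form `(xb) W_L (xb)⁻¹` with `b ∈ W_K` and `L ⊆ K`. If it
contains `A` and `K` is minimal, then `L = K` and the intersection is all of `x W_K x⁻¹`.
-/

namespace MinimalParabolic

open scoped Pointwise

variable {B W : Type*} [Group W] {M : CoxeterMatrix B} (cs : CoxeterSystem M W)

/-! ### The inversion cocycle -/

section InversionCocycle

open Classical in
/-- The action of the simple reflection `s_i` on `W × ℤ/2`: conjugation by `s_i` in the first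
coordinate, and a sign change exactly when the first coordinate is `s_i`. -/
noncomputable def signedConj (i : B) : Function.End (W × ZMod 2) :=
  fun p ↦ (cs.simple i * p.1 * cs.simple i, p.2 + if p.1 = cs.simple i then 1 else 0)

open Classical in
lemma prod_map_signedConj_apply (ω : List B) (p : W × ZMod 2) :
    (ω.map (signedConj cs)).prod p =
      (cs.wordProd ω * p.1 * (cs.wordProd ω)⁻¹, p.2 + (cs.rightInvSeq ω).count p.1) := by
  induction ω with
  | nil =>
    change p = _
    simp
  | cons i ω ih =>
    have first_letter : cs.wordProd ω * p.1 * (cs.wordProd ω)⁻¹ = cs.simple i ↔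
        (cs.wordProd ω)⁻¹ * cs.simple i * cs.wordProd ω = p.1 := by
      rw [mul_inv_eq_iff_eq_mul, mul_assoc, inv_mul_eq_iff_eq_mul, eq_comm]
    rw [List.map_cons, List.prod_cons]
    change signedConj cs i ((ω.map (signedConj cs)).prod p) = _
    simp only [ih, signedConj, first_letter, CoxeterSystem.rightInvSeq, List.count_cons, beq_iff_eq]
    simp [cs.wordProd_cons, mul_assoc, add_assoc]

lemma prod_map_reverse_alternatingWord {G : Type*} [Monoid G] (f : B → G) (i j : B) (m : ℕ) :
    ((CoxeterSystem.alternatingWord j i (2 * m)).reverse.map f).prod = (f i * f j) ^ m := by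
  induction m with
  | zero => simp [CoxeterSystem.alternatingWord]
  | succ m ih =>
    rw [mul_add_one, CoxeterSystem.alternatingWord_succ, CoxeterSystem.alternatingWord_succ]
    simp only [List.concat_eq_append, List.reverse_append, List.reverse_singleton,
      List.singleton_append, List.map_cons, List.prod_cons, ih, pow_succ', mul_assoc]

lemma drop_leftInvSeq_alternatingWord (i j : B) :
    (cs.leftInvSeq (CoxeterSystem.alternatingWord i j (2 * M i j))).drop (M i j) =
      (cs.leftInvSeq (CoxeterSystem.alternatingWord i j (2 * M i j))).take (M i j) := by
  refine List.ext_getElem (by simp; lia) fun k _ hk ↦ ?_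
  have hk : k < M i j := hk.trans_le (List.length_take_le _ _)
  rw [List.getElem_drop, List.getElem_take,
    cs.getElem_leftInvSeq_alternatingWord i j _ _ (by lia),
    cs.getElem_leftInvSeq_alternatingWord i j _ _ (by lia),
    cs.prod_alternatingWord_eq_mul_pow, cs.prod_alternatingWord_eq_mul_pow]
  have half (n : ℕ) : (2 * n + 1) / 2 = n := by lia
  simp [half, pow_add, M.symmetric i j]

open Classical in
lemma count_rightInvSeq_reverse_alternatingWord (i j : B) (t : W) :
    ((cs.rightInvSeq (CoxeterSystem.alternatingWord j i (2 * M i j)).reverse).count t : ZMod 2) =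
      0 := by
  rw [cs.rightInvSeq_reverse, List.count_reverse, M.symmetric i j,
    ← List.take_append_drop (M j i) (cs.leftInvSeq _), List.count_append,
    drop_leftInvSeq_alternatingWord, Nat.cast_add, CharTwo.add_self_eq_zero]

lemma isLiftable_signedConj : M.IsLiftable (signedConj cs) := by
  intro i j
  have trivial_prod : cs.wordProd (CoxeterSystem.alternatingWord j i (2 * M i j)).reverse = 1 := by
    rw [CoxeterSystem.wordProd, prod_map_reverse_alternatingWord, cs.simple_mul_simple_pow]
  refine funext fun p ↦ ?_
  rw [← prod_map_reverse_alternatingWord, prod_map_signedConj_apply, trivial_prod,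
    count_rightInvSeq_reverse_alternatingWord]
  change _ = p
  simp

/-- The action of `W` on `W × ℤ/2` extending `signedConj`. -/
noncomputable def signedAction : W →* Function.End (W × ZMod 2) :=
  cs.lift ⟨signedConj cs, isLiftable_signedConj cs⟩

/-- The sign that `(t, ε)` picks up under the signed action of `w`; for a reflection `t`, it is `1`
exactly when `t` is a right inversion of `w`. -/
noncomputable def inversionParity (w t : W) : ZMod 2 :=
  (signedAction cs w (t, 0)).2

open Classical in
lemma signedAction_wordProd_apply (ω : List B) (p : W × ZMod 2) :
    signedAction cs (cs.wordProd ω) p =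
      (cs.wordProd ω * p.1 * (cs.wordProd ω)⁻¹, p.2 + (cs.rightInvSeq ω).count p.1) := by
  rw [← prod_map_signedConj_apply, signedAction]
  conv_lhs => rw [CoxeterSystem.wordProd, map_list_prod, List.map_map]
  have lift_comp_simple : cs.lift ⟨signedConj cs, isLiftable_signedConj cs⟩ ∘ cs.simple =
      signedConj cs := funext (cs.lift_apply_simple _)
  rw [lift_comp_simple]

open Classical in
lemma inversionParity_wordProd (ω : List B) (t : W) :
    inversionParity cs (cs.wordProd ω) t = (cs.rightInvSeq ω).count t := by
  rw [inversionParity, signedAction_wordProd_apply, zero_add]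

lemma signedAction_apply (w : W) (p : W × ZMod 2) :
    signedAction cs w p = (w * p.1 * w⁻¹, p.2 + inversionParity cs w p.1) := by
  classical
  obtain ⟨ω, rfl⟩ := cs.wordProd_surjective w
  rw [signedAction_wordProd_apply, inversionParity_wordProd]

lemma inversionParity_one (t : W) : inversionParity cs 1 t = 0 := by
  rw [inversionParity, map_one]; rfl

lemma inversionParity_mul (u v t : W) :
    inversionParity cs (u * v) t =
      inversionParity cs v t + inversionParity cs u (v * t * v⁻¹) := by
  have : signedAction cs (u * v) (t, 0) = signedAction cs u (signedAction cs v (t, 0)) := by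
    rw [map_mul]; rfl
  rw [inversionParity, this, signedAction_apply, signedAction_apply, zero_add]

lemma inversionParity_simple_self (i : B) :
    inversionParity cs (cs.simple i) (cs.simple i) = 1 := by
  classical
  rw [← cs.wordProd_singleton, inversionParity_wordProd]
  simp [CoxeterSystem.rightInvSeq]

lemma inversionParity_self {t : W} (ht : cs.IsReflection t) : inversionParity cs t t = 1 := by
  obtain ⟨w, i, rfl⟩ := ht
  have cancel := inversionParity_mul cs w w⁻¹ (w * cs.simple i * w⁻¹)
  have conj_inv : w⁻¹ * (w * cs.simple i * w⁻¹) * w⁻¹⁻¹ = cs.simple i := by group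
  rw [mul_inv_cancel, inversionParity_one, conj_inv] at cancel
  rw [inversionParity_mul, conj_inv, inversionParity_mul, inversionParity_simple_self,
    mul_inv_cancel_right, add_left_comm, ← cancel, add_zero]

lemma isRightInversion_of_inversionParity_eq_one {w t : W} (h : inversionParity cs w t = 1) :
    cs.IsRightInversion w t := by
  classical
  obtain ⟨ω, hω, rfl⟩ := cs.exists_isReduced w
  refine cs.isRightInversion_of_mem_rightInvSeq hω (of_not_not fun hmem ↦ ?_)
  rw [inversionParity_wordProd, List.count_eq_zero_of_not_mem hmem] at h
  exact absurd h (by decide)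

lemma isRightInversion_iff_inversionParity {t : W} (ht : cs.IsReflection t) (w : W) :
    cs.IsRightInversion w t ↔ inversionParity cs w t = 1 := by
  refine ⟨fun h ↦ of_not_not fun hne ↦ ?_, isRightInversion_of_inversionParity_eq_one cs⟩
  have parity_eq_zero : inversionParity cs w t = 0 := by
    generalize inversionParity cs w t = ε at hne
    decide +revert
  have parity_mul : inversionParity cs (w * t) t = 1 := by
    rw [inversionParity_mul, inversionParity_self cs ht, mul_inv_cancel_right, parity_eq_zero,
      add_zero]
  exact ht.isRightInversion_mul_left_iff.1
    (isRightInversion_of_inversionParity_eq_one cs parity_mul) h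

lemma isRightInversion_mul_iff (u v t : W) :
    cs.IsRightInversion (u * v) t ↔
      Xor (cs.IsRightInversion v t) (cs.IsRightInversion u (v * t * v⁻¹)) := by
  by_cases ht : cs.IsReflection t
  · rw [isRightInversion_iff_inversionParity cs ht, isRightInversion_iff_inversionParity cs ht,
      isRightInversion_iff_inversionParity cs (ht.conj v), inversionParity_mul]
    generalize inversionParity cs v t = ε
    generalize inversionParity cs u (v * t * v⁻¹) = δ
    unfold Xor
    decide +revert
  · simp [Xor, CoxeterSystem.IsRightInversion, cs.isReflection_conj_iff, ht]

lemma strong_exchange {ω : List B} {t : W}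
    (h : cs.IsRightInversion (cs.wordProd ω) t) :
    ∃ j < ω.length, cs.wordProd ω * t = cs.wordProd (ω.eraseIdx j) := by
  classical
  rw [isRightInversion_iff_inversionParity cs h.1, inversionParity_wordProd] at h
  have hmem : t ∈ cs.rightInvSeq ω := of_not_not fun hn ↦ by
    simp [List.count_eq_zero_of_not_mem hn] at h
  obtain ⟨j, hj, rfl⟩ := List.mem_iff_getElem.1 hmem
  exact ⟨j, by simpa using hj, by
    rw [← cs.wordProd_mul_getD_rightInvSeq, List.getD_eq_getElem _ _ hj]⟩

end InversionCocycle

/-! ### Special subgroups -/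

section Special

variable {K : Set B}

/-- The special subgroup `W_K` generated by the simple reflections indexed by `K`. -/
abbrev special (K : Set B) : Subgroup W :=
  Subgroup.closure (cs.simple '' K)

lemma simple_mem_special {k : B} (hk : k ∈ K) : cs.simple k ∈ special cs K :=
  Subgroup.subset_closure (Set.mem_image_of_mem _ hk)

lemma wordProd_mem_special {ω : List B} (hω : ∀ i ∈ ω, i ∈ K) : cs.wordProd ω ∈ special cs K :=
  list_prod_mem fun _ hs ↦ by
    obtain ⟨i, hi, rfl⟩ := List.mem_map.1 hs
    exact simple_mem_special cs (hω i hi)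

lemma exists_wordProd_eq_of_mem_special {v : W} (hv : v ∈ special cs K) :
    ∃ ω : List B, (∀ i ∈ ω, i ∈ K) ∧ cs.wordProd ω = v := by
  induction hv using Subgroup.closure_induction with
  | mem _ h =>
    obtain ⟨k, hk, rfl⟩ := h
    exact ⟨[k], by simpa using hk, cs.wordProd_singleton k⟩
  | one => exact ⟨[], by simp, cs.wordProd_nil⟩
  | mul _ _ _ _ hx hy =>
    obtain ⟨α, hα, rfl⟩ := hx
    obtain ⟨β, hβ, rfl⟩ := hy
    exact ⟨α ++ β, by simpa [or_imp, forall_and] using ⟨hα, hβ⟩, cs.wordProd_append α β⟩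
  | inv _ _ hx =>
    obtain ⟨α, hα, rfl⟩ := hx
    exact ⟨α.reverse, by simpa using hα, cs.wordProd_reverse α⟩

lemma mem_special_of_isRightInversion {v t : W} (hv : v ∈ special cs K)
    (ht : cs.IsRightInversion v t) : t ∈ special cs K := by
  obtain ⟨ω, hω, rfl⟩ := exists_wordProd_eq_of_mem_special cs hv
  obtain ⟨j, -, hj⟩ := strong_exchange cs ht
  rw [← Subgroup.mul_mem_cancel_left _ hv, hj]
  exact wordProd_mem_special cs fun i hi ↦ hω i (List.mem_of_mem_eraseIdx hi)

lemma exists_isRightDescent_of_mem_special {v : W} (hv : v ∈ special cs K) (hv1 : v ≠ 1) :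
    ∃ k ∈ K, cs.IsRightDescent v k := by
  obtain ⟨ω, ⟨hω, rfl⟩, hmin⟩ := exists_minimalFor_of_wellFoundedLT
    (fun ω : List B ↦ (∀ i ∈ ω, i ∈ K) ∧ cs.wordProd ω = v) List.length
    (exists_wordProd_eq_of_mem_special cs hv)
  obtain rfl | ⟨α, k, rfl⟩ := ω.eq_nil_or_concat
  · exact absurd cs.wordProd_nil hv1
  simp only [List.concat_eq_append, List.mem_append, List.mem_singleton] at hω
  refine ⟨k, hω k (.inr rfl), of_not_not fun hk ↦ ?_⟩
  -- Otherwise the exchange property shortens `α ++ [k]` by two letters.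
  rw [cs.wordProd_concat, ← cs.isRightDescent_iff_not_isRightDescent_mul,
    ← cs.isRightInversion_simple_iff_isRightDescent] at hk
  obtain ⟨j, hj, hjα⟩ := strong_exchange cs hk
  have hle := hmin ⟨fun i hi ↦ hω i (.inl (List.mem_of_mem_eraseIdx hi)),
    hjα.symm.trans (cs.wordProd_concat k α).symm⟩
  grind [List.length_eraseIdx]

@[elab_as_elim]
lemma special_induction {p : (v : W) → v ∈ special cs K → Prop} (one : p 1 (one_mem _))
    (mul_simple : ∀ (v : W) (hv : v ∈ special cs K) (k : B) (hk : k ∈ K),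
      cs.IsRightDescent v k → p (v * cs.simple k) (mul_mem hv (simple_mem_special cs hk)) → p v hv)
    {v : W} (hv : v ∈ special cs K) : p v hv := by
  induction h : cs.length v using Nat.strong_induction_on generalizing v with
  | _ n ih =>
    obtain rfl | hv1 := eq_or_ne v 1
    · exact one
    obtain ⟨k, hk, hdesc⟩ := exists_isRightDescent_of_mem_special cs hv hv1
    exact mul_simple v hv k hk hdesc (ih _ (h ▸ hdesc) _ rfl)

end Special

/-! ### Intersections of parabolic subgroups -/

section Parabolic

/-- The parabolic subgroup `w W_K w⁻¹`, written with the pointwise action of `MulAut W`; it is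
definitionally the image of `W_K` under `(MulAut.conj w).toMonoidHom`. -/
abbrev parabolic (w : W) (K : Set B) : Subgroup W :=
  MulAut.conj w • special cs K

lemma conj_smul_parabolic (u w : W) (K : Set B) :
    MulAut.conj u • parabolic cs w K = parabolic cs (u * w) K := by
  rw [parabolic, parabolic, smul_smul, map_mul]

lemma parabolic_mul_of_mem {K : Set B} {b : W} (hb : b ∈ special cs K) (x : W) :
    parabolic cs (x * b) K = parabolic cs x K := by
  rw [← conj_smul_parabolic, parabolic, Subgroup.conj_smul_eq_self_of_mem hb]

lemma exists_mem_forall_length_mul_le (H : Subgroup W) (g : W) :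
    ∃ b ∈ H, ∀ v ∈ H, cs.length (g * b) ≤ cs.length (g * b * v) := by
  obtain ⟨b, hb, hmin⟩ := exists_minimalFor_of_wellFoundedLT (· ∈ H)
    (fun b ↦ cs.length (g * b)) ⟨1, one_mem H⟩
  refine ⟨b, hb, fun v hv ↦ ?_⟩
  rw [mul_assoc]
  exact (le_total _ _).elim id (hmin (mul_mem hb hv))

lemma isRightInversion_conj_of_forall_length_le {K : Set B} {d v t : W}
    (hd : ∀ v ∈ special cs K, cs.length d ≤ cs.length (d * v)) (hv : v ∈ special cs K)
    (ht : cs.IsRightInversion v t) : cs.IsRightInversion (d * v * d⁻¹) (d * t * d⁻¹) := by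
  have not_inversion {r : W} (hr : r ∈ special cs K) : ¬cs.IsRightInversion d r :=
    fun h ↦ h.2.not_ge (hd r hr)
  have htK : t ∈ special cs K := mem_special_of_isRightInversion cs hv ht
  have inversion_mul : cs.IsRightInversion (d * v * d⁻¹ * d) t := by
    rw [inv_mul_cancel_right, isRightInversion_mul_iff]
    exact .inl ⟨ht, not_inversion (mul_mem (mul_mem hv htK) (inv_mem hv))⟩
  rw [isRightInversion_mul_iff] at inversion_mul
  exact (inversion_mul.resolve_left fun h ↦ not_inversion htK h.1).1

/-- Kilmoyer, Solomon and Tits take `d` shortest in `W_J d W_K`; then `s_k ∈ d⁻¹ W_J d` means that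
`d s_k d⁻¹` is itself a simple reflection of `J`. -/
lemma parabolic_inv_inf_special {J K : Set B} {d : W}
    (hd : ∀ v ∈ special cs K, cs.length d ≤ cs.length (d * v)) :
    parabolic cs d⁻¹ J ⊓ special cs K =
      special cs {k ∈ K | cs.simple k ∈ parabolic cs d⁻¹ J} := by
  have mem_iff (y : W) : y ∈ parabolic cs d⁻¹ J ↔ d * y * d⁻¹ ∈ special cs J := by
    simp [Subgroup.mem_pointwise_smul_iff_inv_smul_mem]
  apply le_antisymm
  · rintro v ⟨hvJ, hvK⟩
    revert hvJ
    induction hvK using special_induction with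
    | one => exact fun _ ↦ one_mem _
    | mul_simple v hv k hk hdesc ih =>
      intro hvJ
      have hkJ : cs.simple k ∈ parabolic cs d⁻¹ J :=
        (mem_iff _).2 <| mem_special_of_isRightInversion cs ((mem_iff v).1 hvJ) <|
          isRightInversion_conj_of_forall_length_le cs hd hv <|
            (cs.isRightInversion_simple_iff_isRightDescent v k).2 hdesc
      rw [← cs.simple_mul_simple_cancel_right (w := v) k]
      exact mul_mem (ih (mul_mem hvJ hkJ)) (simple_mem_special cs ⟨hk, hkJ⟩)
  · rw [special, Subgroup.closure_le]
    rintro _ ⟨k, ⟨hkK, hkJ⟩, rfl⟩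
    exact ⟨hkJ, simple_mem_special cs hkK⟩

lemma exists_parabolic_inf_parabolic_eq (w x : W) (J K : Set B) :
    ∃ b ∈ special cs K, ∃ L ⊆ K,
      parabolic cs w J ⊓ parabolic cs x K = parabolic cs (x * b) L := by
  obtain ⟨b, hb, hd⟩ := exists_mem_forall_length_mul_le cs (special cs K) (w⁻¹ * x)
  set d := w⁻¹ * x * b with hd_def
  have hw : x * b * d⁻¹ = w := by rw [hd_def]; group
  refine ⟨b, hb, {k ∈ K | cs.simple k ∈ parabolic cs d⁻¹ J}, Set.sep_subset _ _, ?_⟩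
  calc parabolic cs w J ⊓ parabolic cs x K
    _ = MulAut.conj (x * b) • parabolic cs d⁻¹ J ⊓ parabolic cs (x * b) K := by
      rw [conj_smul_parabolic, hw, parabolic_mul_of_mem cs hb]
    _ = parabolic cs (x * b) {k ∈ K | cs.simple k ∈ parabolic cs d⁻¹ J} := by
      rw [← Subgroup.smul_inf, parabolic_inv_inf_special cs hd]

lemma parabolic_le_parabolic_of_forall_subset_eq {A : Set W} {w x : W} {J K : Set B}
    (hJ : A ⊆ parabolic cs w J) (hK : A ⊆ parabolic cs x K)
    (hKmin : ∀ (y : W), ∀ L ⊆ K, A ⊆ parabolic cs y L → L = K) :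
    parabolic cs x K ≤ parabolic cs w J := by
  obtain ⟨b, hb, L, hLK, hL⟩ := exists_parabolic_inf_parabolic_eq cs w x J K
  have hAL : A ⊆ parabolic cs (x * b) L := hL ▸ Set.subset_inter hJ hK
  rw [hKmin _ L hLK hAL, parabolic_mul_of_mem cs hb] at hL
  exact inf_eq_right.1 hL

end Parabolic

end MinimalParabolic

open MinimalParabolic in
theorem minimal_parabolic_unique_general
    {B W : Type*} [Group W] {M : CoxeterMatrix B} (cs : CoxeterSystem M W)
    (A : Set W) (w x : W) (J K : Set B)
    (hJ : A ⊆ parabolic cs w J) (hK : A ⊆ parabolic cs x K)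
    (hJmin : ∀ (y : W), ∀ L ⊆ J, A ⊆ parabolic cs y L → L = J)
    (hKmin : ∀ (y : W), ∀ L ⊆ K, A ⊆ parabolic cs y L → L = K) :
    parabolic cs w J = parabolic cs x K :=
  le_antisymm (parabolic_le_parabolic_of_forall_subset_eq cs hK hJ hJmin)
    (parabolic_le_parabolic_of_forall_subset_eq cs hJ hK hKmin)

/-- Uniqueness of the minimal-rank parabolic subgroup containing a subset `A`:
if `w W_J w⁻¹` and `x W_K x⁻¹` both contain `A` and both have minimal rank among
parabolic subgroups containing `A`, then they coincide. -/
theorem minimal_parabolic_unique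
    {B : Type*} [Finite B] {W : Type*} [Group W] {M : CoxeterMatrix B}
    (cs : CoxeterSystem M W) (A : Set W) (w x : W) (J K : Set B)
    (hJ : A ⊆ ((Subgroup.closure (cs.simple '' J)).map (MulAut.conj w).toMonoidHom : Set W))
    (hK : A ⊆ ((Subgroup.closure (cs.simple '' K)).map (MulAut.conj x).toMonoidHom : Set W))
    (hJmin : ∀ (y : W) (L : Set B),
      A ⊆ ((Subgroup.closure (cs.simple '' L)).map (MulAut.conj y).toMonoidHom : Set W) →
      J.ncard ≤ L.ncard)
    (hKmin : ∀ (y : W) (L : Set B),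
      A ⊆ ((Subgroup.closure (cs.simple '' L)).map (MulAut.conj y).toMonoidHom : Set W) →
      K.ncard ≤ L.ncard) :
    (Subgroup.closure (cs.simple '' J)).map (MulAut.conj w).toMonoidHom =
      (Subgroup.closure (cs.simple '' K)).map (MulAut.conj x).toMonoidHom :=
  minimal_parabolic_unique_general cs A w x J K hJ hK
    (fun y L hLJ hL ↦ Set.eq_of_subset_of_ncard_le hLJ (hJmin y L hL))
    (fun y L hLK hL ↦ Set.eq_of_subset_of_ncard_le hLK (hKmin y L hL))
end
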